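/- Let k ≥ 2 be an even integer, q a prime power with q ≡ k+1 (mod 2k), and χ_k a multiplicative character of F_q of order k. Let X_k := {(t1,t2,t3,t4,t5) ∈ (ℤ/kℤ)^5 : each of t1, t2, t3 is different from 0, from t4 and from t5, and t1+t2+t3 ≠ t4+t5 in ℤ/kℤ}. Then, as an identity of complex numbers, k^6 · K_4(G_k(q)) = q(q−1) · [ 10·R_k(q)^2 + 5(q − k^2 + 1)·R_k(q) − 10·S_k(q) − 5·S⁻_k(q) + q^2 − 10(k−1)^2·q + 5k^2(k−1) + 1 + Σ_{(t1,…,t5) ∈ X_k} (−1)^{t3+t5} · Σ_{a,b ∈ F_q} χ_k^{t1−t5}(a) · χ_k^{t5−t3}(1−a) · χ_k^{t2}(b) · χ_k^{t4−t2}(b−1) · χ_k^{−t1}(a−b) ], where (−1)^t for t ∈ ℤ/kℤ is defined via any integer representative (well-defined since k is even). -/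

import Mathlib

/-!
The proof counts by characters.  As `-1` is not a `k`-th power, the digraph is asymmetric, so a
transitive subtournament has a unique ordering; an affine change of coordinates moves its first two
vertices to `0` and `1`, and orthogonality of the powers of `χ` (`Paley.Good.count`) gives
`k^6 K_4 = q (q - 1) ∑ f(A, B, C, D, E)`, the sum over all exponents in `ℤ/kℤ` of
`f = ∑_{a,b} χ^A(a) χ^B(a-1) χ^C(b) χ^D(b-1) χ^E(a-b)`.

The points `(a, b)` with `a, a - 1, b, b - 1, a - b` nonzero form the moduli space of five distinct
points on the projective line, and ten linear forms in the exponents correspond to its ten boundary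
divisors.  The exponents on which none of the forms vanishes are the set `X_k`, up to a linear
change of variables (`Paley.Good.sum_X`).  An automorphism of order five of the moduli space
preserves `f` and permutes the ten forms in two orbits of length five, called the pentagon and the
pentagram here; an involution exchanges the two orbits and multiplies `f` by a sign.  The exponents
outside `X_k` are handled by a partition of unity (`Paley.unity`): each of them shares its mass
equally among the vanishing pentagon forms or, if there are none, among the vanishing pentagram
forms.  By the symmetries the total is five times the weight of the pentagon form `E`
plus five times the weight of the pentagram form `B`, and both become weighted sums over `E = 0`
(`Paley.IsFive.total`).

For `E = 0` the sum `f` splits as `J(A, B) J(C, D) - J(A + C, B + D)` with Jacobi sums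
`J(A, B) = ∑_a χ^A(a) χ^B(a-1)`.  Each Jacobi sum is a nondegenerate part plus an explicit function
of the indicators of `A = 0`, `B = 0`, `A + B = 0`.  Expanding the product leaves marginal sums of
the table of nondegenerate Jacobi sums, which the symmetries of the table and `|J|² = q` reduce to
`R²`, `R`, `S`, `S⁻` and constants (`Paley.edge_total`).
-/

/-- Number of transitive subtournaments of order `m` of the digraph `edge`. -/
noncomputable def transK {V : Type} [DecidableEq V] (edge : V → V → Prop) (m : ℕ) : ℕ :=
  {s : Finset V | ∃ f : Fin m → V, Function.Injective f ∧ s = Finset.image f Finset.univ ∧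
    ∀ i j : Fin m, i < j → edge (f i) (f j)}.ncard

/-- Jacobi sum `J(A,B) = ∑_{a ∈ F} A(a) B(1-a)`. -/
noncomputable def jac {F : Type} [Field F] [Fintype F] (A B : MulChar F ℂ) : ℂ :=
  ∑ a : F, A a * B (1 - a)

/-- `R_k(q) = ∑_{1 ≤ s,t ≤ k-1, s+t ≢ 0 (k)} J(χ^s, χ^t)`. -/
noncomputable def Rk {F : Type} [Field F] [Fintype F] (k : ℕ) (χ : MulChar F ℂ) : ℂ :=
  ∑ s ∈ Finset.Icc 1 (k - 1), ∑ t ∈ Finset.Icc 1 (k - 1),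
    if (s : ZMod k) + t ≠ 0 then jac (χ ^ s) (χ ^ t) else 0

/-- `S_k(q) = ∑_{1 ≤ s,t,v ≤ k-1, s+t,v+t,v-s ≢ 0 (k)} J(χ^s, χ^t) J(χ^{-s}, χ^v)`. -/
noncomputable def Sk {F : Type} [Field F] [Fintype F] (k : ℕ) (χ : MulChar F ℂ) : ℂ :=
  ∑ s ∈ Finset.Icc 1 (k - 1), ∑ t ∈ Finset.Icc 1 (k - 1), ∑ v ∈ Finset.Icc 1 (k - 1),
    if (s : ZMod k) + t ≠ 0 ∧ (v : ZMod k) + t ≠ 0 ∧ (v : ZMod k) - s ≠ 0 then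
      jac (χ ^ s) (χ ^ t) * jac (χ⁻¹ ^ s) (χ ^ v) else 0

/-- `S⁻_k(q)`: as `S_k(q)` but with each term multiplied by `(-1)^{s+t}`. -/
noncomputable def Smk {F : Type} [Field F] [Fintype F] (k : ℕ) (χ : MulChar F ℂ) : ℂ :=
  ∑ s ∈ Finset.Icc 1 (k - 1), ∑ t ∈ Finset.Icc 1 (k - 1), ∑ v ∈ Finset.Icc 1 (k - 1),
    if (s : ZMod k) + t ≠ 0 ∧ (v : ZMod k) + t ≠ 0 ∧ (v : ZMod k) - s ≠ 0 then
      (-1 : ℂ) ^ (s + t) * (jac (χ ^ s) (χ ^ t) * jac (χ⁻¹ ^ s) (χ ^ v)) else 0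

set_option linter.unusedSectionVars false
set_option linter.unusedSimpArgs false

namespace Paley
open Finset

/-! ### Sums of indicators and signs over a finite ring -/

section Group

variable {V : Type} [CommRing V] [Fintype V] [DecidableEq V]

/-- The indicator of zero, with complex values. -/
def zi (x : V) : ℂ := if x = 0 then 1 else 0

lemma zi_zero : zi (0 : V) = 1 := by simp [zi]

lemma zi_neg (x : V) : zi (-x) = zi x := by simp [zi]

lemma zi_sub_comm (x y : V) : zi (x - y) = zi (y - x) := by
  rw [← zi_neg, neg_sub]

lemma sum_zi_mul (h : V → ℂ) : ∑ x, zi x * h x = h 0 := by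
  simp [zi]

lemma sum_zi_add_mul (a : V) (h : V → ℂ) : ∑ x, zi (x + a) * h x = h (-a) := by
  simp [zi, add_eq_zero_iff_eq_neg]

lemma sum_zi_add_mul' (a : V) (h : V → ℂ) : ∑ x, zi (a + x) * h x = h (-a) := by
  simp only [add_comm a]; exact sum_zi_add_mul a h

lemma sum_zi_sub_mul (a : V) (h : V → ℂ) : ∑ x, zi (x - a) * h x = h a := by
  simp [zi, sub_eq_zero]

lemma sum_zi_sub_mul' (a : V) (h : V → ℂ) : ∑ x, zi (a - x) * h x = h a := by
  simp only [zi_sub_comm a]; exact sum_zi_sub_mul a h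

lemma sum_zi : ∑ x : V, zi x = 1 := by simp [zi]

lemma sum_zi_add (a : V) : ∑ x : V, zi (x + a) = 1 := by
  simpa using sum_zi_add_mul a (fun _ => 1)

lemma sum_zi_add' (a : V) : ∑ x : V, zi (a + x) = 1 := by
  simpa using sum_zi_add_mul' a (fun _ => 1)

lemma sum_zi_sub (a : V) : ∑ x : V, zi (x - a) = 1 := by
  simpa using sum_zi_sub_mul a (fun _ => 1)

lemma sum_zi_sub' (a : V) : ∑ x : V, zi (a - x) = 1 := by
  simpa using sum_zi_sub_mul' a (fun _ => 1)

lemma sum_const_V (c : ℂ) : ∑ _x : V, c = Fintype.card V * c := by simp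

lemma apply_zi (g : ℂ → ℂ) (x : V) : g (zi x) = g 0 + (g 1 - g 0) * zi x := by
  unfold zi; split_ifs <;> ring

lemma sum1 (g : ℂ → ℂ) :
    ∑ x : V, g (zi x) = (Fintype.card V - 1 : ℂ) * g 0 + g 1 := by
  simp only [apply_zi g, sum_add_distrib, ← mul_sum, sum_zi, sum_const_V]
  ring

/-- On `V × V`, the triple `(zi x, zi y, zi (x + y))` takes only five values. -/
lemma apply_zi₂ (g : ℂ → ℂ → ℂ → ℂ) (x y : V) :
    g (zi x) (zi y) (zi (x + y)) = g 0 0 0 + (g 1 0 0 - g 0 0 0) * zi x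
      + (g 0 1 0 - g 0 0 0) * zi y + (g 0 0 1 - g 0 0 0) * zi (y + x)
      + (g 1 1 1 - g 1 0 0 - g 0 1 0 - g 0 0 1 + 2 * g 0 0 0) * (zi x * zi y) := by
  rw [add_comm y x]
  by_cases hx : x = 0
  · subst hx; by_cases hy : y = 0
    · simp [zi, hy]; ring
    · simp [zi, hy]
  · by_cases hy : y = 0
    · simp [zi, hx, hy]
    · by_cases hxy : x + y = 0
      · simp [zi, hx, hy, hxy]
      · simp [zi, hx, hy, hxy]

/-- The five values of `apply_zi₂` occur `(n-1)(n-2)`, `n-1`, `n-1`, `n-1` and `1` times, where `n` is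
the cardinality of `V`.  The lemmas `sum1s`, `sum2x`, `sum2y`, `sum2xy` are the analogues with a sign
in the summand. -/
lemma sum2 (g : ℂ → ℂ → ℂ → ℂ) :
    ∑ x : V, ∑ y : V, g (zi x) (zi y) (zi (x + y)) =
      (Fintype.card V - 1 : ℂ) * (Fintype.card V - 2) * g 0 0 0
        + (Fintype.card V - 1 : ℂ) * (g 1 0 0 + g 0 1 0 + g 0 0 1) + g 1 1 1 := by
  simp only [apply_zi₂ g, sum_add_distrib, ← mul_sum, sum_zi, sum_zi_add, sum_const_V, mul_one]
  ring

variable (s : V → ℂ)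

/-- `s` is a nontrivial character of the additive group with values in `{1, -1}`. -/
structure IsSign : Prop where
  zero : s 0 = 1
  add : ∀ x y, s (x + y) = s x * s y
  sq : ∀ x, s x * s x = 1
  sum : ∑ x, s x = 0

variable {s}

lemma IsSign.neg (hs : IsSign s) (x : V) : s (-x) = s x := by
  have h1 := hs.add x (-x)
  rw [add_neg_cancel, hs.zero] at h1
  have h2 := hs.sq x
  linear_combination -s x * h1 - s (-x) * h2

lemma IsSign.sub (hs : IsSign s) (x y : V) : s (x - y) = s x * s y := by
  rw [sub_eq_add_neg, hs.add, hs.neg]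

lemma sum1s (hs : IsSign s) (g : ℂ → ℂ) : ∑ x : V, s x * g (zi x) = g 1 - g 0 := by
  have : ∀ x, s x * g (zi x) = s x * g 0 + (g 1 - g 0) * (zi x * s x) := by
    intro x; rw [apply_zi g]; ring
  simp only [this, sum_add_distrib, ← mul_sum, ← sum_mul, sum_zi_mul, hs.sum, hs.zero]
  ring

lemma sum2x (hs : IsSign s) (g : ℂ → ℂ → ℂ → ℂ) :
    ∑ x : V, ∑ y : V, s x * g (zi x) (zi y) (zi (x + y)) =
      -(Fintype.card V - 2 : ℂ) * g 0 0 0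
        + (Fintype.card V - 1 : ℂ) * g 1 0 0 - g 0 1 0 - g 0 0 1 + g 1 1 1 := by
  have : ∀ x, ∑ y : V, s x * g (zi x) (zi y) (zi (x + y)) =
      s x * ((Fintype.card V - 2) * g 0 0 0 + g 0 1 0 + g 0 0 1)
      + (zi x * s x) * (Fintype.card V * (g 1 0 0 - g 0 0 0)
        + (g 1 1 1 - g 1 0 0 - g 0 1 0 - g 0 0 1 + 2 * g 0 0 0)) := by
    intro x
    simp only [apply_zi₂ g, sum_add_distrib, ← mul_sum, sum_zi, sum_zi_add, sum_const_V]
    ring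
  simp only [this, sum_add_distrib, ← sum_mul, sum_zi_mul, hs.sum, hs.zero]
  ring

lemma sum2y (hs : IsSign s) (g : ℂ → ℂ → ℂ → ℂ) :
    ∑ x : V, ∑ y : V, s y * g (zi x) (zi y) (zi (x + y)) =
      -(Fintype.card V - 2 : ℂ) * g 0 0 0
        + (Fintype.card V - 1 : ℂ) * g 0 1 0 - g 1 0 0 - g 0 0 1 + g 1 1 1 := by
  rw [sum_comm, ← sum2x hs (fun a b c => g b a c)]
  exact sum_congr rfl fun y _ => sum_congr rfl fun x _ => by rw [add_comm x y]

lemma sum2xy (hs : IsSign s) (g : ℂ → ℂ → ℂ → ℂ) :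
    ∑ x : V, ∑ y : V, s x * s y * g (zi x) (zi y) (zi (x + y)) =
      -(Fintype.card V - 2 : ℂ) * g 0 0 0
        + (Fintype.card V - 1 : ℂ) * g 0 0 1 - g 0 1 0 - g 1 0 0 + g 1 1 1 := by
  have h := sum2y hs (fun a b c => g a c b)
  have e : ∀ x : V, ∑ y : V, s y * g (zi x) (zi (x + y)) (zi y)
      = ∑ y : V, s x * s y * g (zi x) (zi y) (zi (x + y)) := by
    intro x
    -- substitute `y ↦ -(x + y)`, which exchanges `zi y` and `zi (x + y)`
    rw [← Equiv.sum_comp ((Equiv.addLeft x).trans (Equiv.neg V))]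
    refine sum_congr rfl fun y _ => ?_
    simp only [Equiv.trans_apply, Equiv.coe_addLeft, Equiv.neg_apply, hs.neg, hs.add, zi_neg]
    rw [show x + -(x + y) = -y by ring, zi_neg]
  simp only [e] at h
  rw [h]
  ring

/-- The degenerate part of a Jacobi sum: the value of `∑ a, ψ_A(a) ψ_B(a-1)` when one of
`A`, `B`, `A + B` vanishes, and `0` otherwise. -/
def del (s : V → ℂ) (q : ℂ) (A B : V) : ℂ :=
  -zi B - s B * zi A - zi (A + B) + (q + 1) * (zi A * zi B)

lemma sum_del (q : ℂ) (g : V → V → ℂ) :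
    ∑ C, ∑ D, del s q C D * g C D =
      -(∑ C, g C 0) - (∑ D, s D * g 0 D) - (∑ D, g (-D) D) + (q + 1) * g 0 0 := by
  have h1 : ∑ C, ∑ D, zi D * g C D = ∑ C, g C 0 := by simp only [sum_zi_mul]
  have h2 : ∑ C, ∑ D, zi C * (s D * g C D) = ∑ D, s D * g 0 D := by
    simp only [← mul_sum, sum_zi_mul]
  have h3 : ∑ C, ∑ D, zi (C + D) * g C D = ∑ D, g (-D) D := by
    rw [sum_comm]; simp only [sum_zi_add_mul]
  have h4 : ∑ C, ∑ D, zi C * (zi D * g C D) = g 0 0 := by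
    simp only [← mul_sum, sum_zi_mul]
  rw [← h1, ← h2, ← h3, ← h4, mul_sum]
  simp only [mul_sum, ← sum_neg_distrib, ← sum_sub_distrib, ← sum_add_distrib]
  refine sum_congr rfl fun C _ => sum_congr rfl fun D _ => ?_
  unfold del; ring

/-- The change of variables `P = A + C`, `Q = B + D`, adapted to the term `J(A + C, B + D)`. -/
lemma sum_shift (h : V → V → ℂ) (g : V → V → V → V → ℂ) :
    ∑ A, ∑ B, ∑ C, ∑ D, h (A + C) (B + D) * g A B C D =
      ∑ P, ∑ Q, h P Q * ∑ A, ∑ B, g A B (P - A) (Q - B) := by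
  have e : ∀ A B, ∑ C, ∑ D, h (A + C) (B + D) * g A B C D =
      ∑ P, ∑ Q, h P Q * g A B (P - A) (Q - B) := by
    intro A B
    rw [← Equiv.sum_comp (Equiv.subRight A)]
    refine sum_congr rfl fun P _ => ?_
    rw [← Equiv.sum_comp (Equiv.subRight B)]
    refine sum_congr rfl fun Q _ => ?_
    simp
  simp only [e, mul_sum]
  -- move the summations over `A`, `B` inside
  calc _ = ∑ A, ∑ P, ∑ B, ∑ Q, h P Q * g A B (P - A) (Q - B) := by
        refine sum_congr rfl fun A _ => sum_comm
    _ = ∑ A, ∑ P, ∑ Q, ∑ B, h P Q * g A B (P - A) (Q - B) := by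
        refine sum_congr rfl fun A _ => sum_congr rfl fun P _ => sum_comm
    _ = ∑ P, ∑ A, ∑ Q, ∑ B, h P Q * g A B (P - A) (Q - B) := sum_comm
    _ = _ := sum_congr rfl fun P _ => sum_comm

end Group

/-! ### Tables of Jacobi sums and their marginals -/

section Group

variable {V : Type} [CommRing V] [Fintype V] [DecidableEq V]
variable {s : V → ℂ} {q : ℂ} {J : V → V → ℂ}

/-- The properties of the table of Jacobi sums `J A B = ∑_a ψ_A(a) ψ_B(a - 1)`, cut off to the
triples `A, B, A + B ≠ 0`, which enter the evaluation. -/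
structure IsJac (s : V → ℂ) (q : ℂ) (J : V → V → ℂ) : Prop where
  left : ∀ B, J 0 B = 0
  right : ∀ A, J A 0 = 0
  diag : ∀ A B, A + B = 0 → J A B = 0
  swap : ∀ A B, J A B = s (A + B) * J B A
  refl : ∀ A B, J A B = s B * J (-A - B) B
  norm : ∀ A B, A ≠ 0 → B ≠ 0 → A + B ≠ 0 → J A B * J (-A) (-B) = q

lemma IsJac.nondeg (hJ : IsJac s q J) {A B : V} (h : J A B ≠ 0) :
    A ≠ 0 ∧ B ≠ 0 ∧ A + B ≠ 0 :=
  ⟨fun e => h (e ▸ hJ.left B), fun e => h (e ▸ hJ.right A), fun e => h (hJ.diag A B e)⟩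

/-- Sum of all the nondegenerate Jacobi sums. -/
def tot (J : V → V → ℂ) : ℂ := ∑ A, ∑ B, J A B

/-- Row sums. -/
def row (J : V → V → ℂ) (A : V) : ℂ := ∑ B, J A B

/-- Row sums twisted by the sign character. -/
def srow (s : V → ℂ) (J : V → V → ℂ) (A : V) : ℂ := ∑ B, s B * J A B

/-- The third transposition in the symmetric group generated by the exchange of the arguments and the
reflection of the first argument.  It changes no sign. -/
lemma IsJac.third (hs : IsSign s) (hJ : IsJac s q J) (A B : V) : J A B = J A (-A - B) := by
  rw [hJ.swap A B, hJ.refl B A, hJ.swap (-B - A) A]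
  rw [show -B - A + A = -B by ring, show -A - B = -B - A by ring, hs.add, hs.neg]
  have h1 := hs.sq A
  have h2 := hs.sq B
  linear_combination (s B * s B * J A (-B - A)) * h1 + J A (-B - A) * h2

/-- The reflection `B ↦ -(x + B)` fixes the terms of the row of `x` up to the sign of `x`, so the
twisted row sums are supported on even `x`. -/
lemma IsJac.s_mul_srow (hs : IsSign s) (hJ : IsJac s q J) (x : V) :
    s x * srow s J x = srow s J x := by
  unfold srow
  conv_rhs => rw [← Equiv.sum_comp ((Equiv.addLeft x).trans (Equiv.neg V))]
  rw [mul_sum]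
  refine sum_congr rfl fun B _ => ?_
  simp only [Equiv.trans_apply, Equiv.coe_addLeft, Equiv.neg_apply, hs.neg, hs.add]
  rw [hJ.third hs x B, show -(x + B) = -x - B by ring]; ring

/-- Column sums are twisted row sums, by the exchange of the two arguments. -/
lemma IsJac.sum_left (hs : IsSign s) (hJ : IsJac s q J) (B : V) : ∑ A, J A B = srow s J B := by
  rw [← hJ.s_mul_srow hs B, srow, mul_sum]
  refine sum_congr rfl fun A _ => ?_
  rw [hJ.swap A B, hs.add]; ring

lemma IsJac.marg_right (hs : IsSign s) (hJ : IsJac s q J) (h : V → ℂ) :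
    ∑ A, ∑ B, J A B * h B = ∑ B, srow s J B * h B := by
  rw [sum_comm]
  simp only [← sum_mul, hJ.sum_left hs]

lemma marg_left (h : V → ℂ) : ∑ A, ∑ B, J A B * h A = ∑ A, row J A * h A := by
  simp only [← sum_mul, row]

lemma IsJac.marg_sum_aux (hJ : IsJac s q J) (k h : V → ℂ) :
    ∑ A, ∑ B, k B * J A B * h (A + B) = ∑ c, (∑ B, k B * (s B * J c B)) * h (-c) := by
  simp only [sum_mul]
  rw [sum_comm]
  conv_rhs => rw [sum_comm]
  refine sum_congr rfl fun B _ => ?_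
  rw [← Equiv.sum_comp ((Equiv.addRight B).trans (Equiv.neg V))]
  refine sum_congr rfl fun c _ => ?_
  simp only [Equiv.trans_apply, Equiv.coe_addRight, Equiv.neg_apply]
  rw [hJ.refl, show -(c + B) + B = -c by ring, show -(-(c + B)) - B = c by ring]

/-- The marginal along `A + B` is also given by the twisted row sums, and by the untwisted ones if a
sign is inserted (`IsJac.marg_sum_s`). -/
lemma IsJac.marg_sum (hJ : IsJac s q J) (h : V → ℂ) :
    ∑ A, ∑ B, J A B * h (A + B) = ∑ c, srow s J c * h (-c) := by
  simpa [srow] using hJ.marg_sum_aux (fun _ => 1) h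

lemma IsJac.marg_sum_s (hs : IsSign s) (hJ : IsJac s q J) (h : V → ℂ) :
    ∑ A, ∑ B, s B * J A B * h (A + B) = ∑ c, row J c * h (-c) := by
  rw [hJ.marg_sum_aux]
  simp only [← mul_assoc, hs.sq, one_mul, row]

lemma IsJac.tot_eq (hs : IsSign s) (hJ : IsJac s q J) : ∑ x, srow s J x = tot J := by
  simpa [tot] using (hJ.marg_right hs (fun _ => 1)).symm

lemma IsJac.tot_right (hs : IsSign s) (hJ : IsJac s q J) :
    ∑ A, ∑ B, J A B * s B = tot J := by
  rw [hJ.marg_right hs, ← hJ.tot_eq hs]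
  exact sum_congr rfl fun x _ => by rw [mul_comm, hJ.s_mul_srow hs]

lemma IsJac.tot_sum (hs : IsSign s) (hJ : IsJac s q J) :
    ∑ A, ∑ B, J A B * s (A + B) = tot J := by
  rw [hJ.marg_sum, ← hJ.tot_eq hs]
  exact sum_congr rfl fun x _ => by rw [hs.neg, mul_comm, hJ.s_mul_srow hs]

/-- The sum of products of two Jacobi sums glued along opposite characters. -/
def glue (s : V → ℂ) (J : V → V → ℂ) : ℂ := ∑ x, srow s J x * srow s J (-x)

/-- The glued sum with a sign on one of the two factors. -/
def sglue (s : V → ℂ) (J : V → V → ℂ) : ℂ := ∑ x, row J x * srow s J (-x)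

lemma sum_mul_sum₂ (g h : V → V → ℂ) :
    ∑ A, ∑ B, ∑ C, ∑ D, g A B * h C D = (∑ A, ∑ B, g A B) * ∑ C, ∑ D, h C D := by
  simp only [← mul_sum, ← sum_mul]

/-- Two Jacobi sums whose second characters are opposite.  The variants `col3` and `col1s` prescribe
opposite values of `A + B` and `C + D`, respectively of the first characters; an `s` at the end of
the name indicates an additional sign `s D`. -/
lemma IsJac.col2 (hs : IsSign s) (hJ : IsJac s q J) :
    ∑ A, ∑ B, ∑ C, ∑ D, J A B * J C D * zi (B + D) = glue s J := by
  have : ∀ A B, ∑ C, ∑ D, J A B * J C D * zi (B + D) = J A B * srow s J (-B) := by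
    intro A B
    simp only [mul_assoc, ← mul_sum, hJ.marg_right hs]
    simp only [mul_comm (srow s J _), sum_zi_add_mul']
  simp only [this, hJ.marg_right hs, glue]

lemma IsJac.col2s (hs : IsSign s) (hJ : IsJac s q J) :
    ∑ A, ∑ B, ∑ C, ∑ D, s D * (J A B * J C D * zi (B + D)) = glue s J := by
  have : ∀ A B, ∑ C, ∑ D, s D * (J A B * J C D * zi (B + D)) = J A B * srow s J (-B) := by
    intro A B
    have e : ∀ C D, s D * (J A B * J C D * zi (B + D)) = J A B * (J C D * (s D * zi (B + D))) :=
      fun C D => by ring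
    simp only [e, ← mul_sum, hJ.marg_right hs]
    simp only [← mul_assoc, mul_comm (srow s J _) (s _), hJ.s_mul_srow hs]
    simp only [mul_comm (srow s J _), sum_zi_add_mul']
  simp only [this, hJ.marg_right hs, glue]

lemma IsJac.col3 (hJ : IsJac s q J) :
    ∑ A, ∑ B, ∑ C, ∑ D, J A B * J C D * zi (A + B + C + D) = glue s J := by
  have : ∀ A B, ∑ C, ∑ D, J A B * J C D * zi (A + B + C + D) = J A B * srow s J (A + B) := by
    intro A B
    simp only [mul_assoc, ← mul_sum, add_assoc (A + B), hJ.marg_sum (fun x => zi (A + B + x))]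
    simp only [mul_comm (srow s J _), ← sub_eq_add_neg, sum_zi_sub_mul']
  simp only [this, hJ.marg_sum (fun x => srow s J x), glue]

lemma sglue_eq (s : V → ℂ) (J : V → V → ℂ) : ∑ x, srow s J x * row J (-x) = sglue s J := by
  unfold sglue
  rw [← Equiv.sum_comp (Equiv.neg V)]
  exact sum_congr rfl fun x _ => by simp [mul_comm]

lemma IsJac.col3s (hs : IsSign s) (hJ : IsJac s q J) :
    ∑ A, ∑ B, ∑ C, ∑ D, s D * (J A B * J C D * zi (A + B + C + D)) = sglue s J := by
  have : ∀ A B, ∑ C, ∑ D, s D * (J A B * J C D * zi (A + B + C + D)) =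
      J A B * row J (A + B) := by
    intro A B
    have e : ∀ C D, s D * (J A B * J C D * zi (A + B + C + D)) =
      J A B * (s D * J C D * zi (A + B + (C + D))) := fun C D => by rw [← add_assoc]; ring
    simp only [e, ← mul_sum, hJ.marg_sum_s hs (fun x => zi (A + B + x))]
    simp only [mul_comm (row J _), ← sub_eq_add_neg, sum_zi_sub_mul']
  simp only [this, hJ.marg_sum (fun x => row J x)]
  exact sglue_eq s J

lemma col1s (s : V → ℂ) (J : V → V → ℂ) :
    ∑ A, ∑ B, ∑ C, ∑ D, s D * (J A B * J C D * zi (A + C)) = sglue s J := by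
  have : ∀ A B, ∑ C, ∑ D, s D * (J A B * J C D * zi (A + C)) = J A B * srow s J (-A) := by
    intro A B
    have e : ∀ C D, s D * (J A B * J C D * zi (A + C)) =
      J A B * (zi (A + C) * (s D * J C D)) := fun C D => by ring
    simp only [e, ← mul_sum, sum_zi_add_mul', srow]
  simp only [this, marg_left, sglue]

lemma IsJac.norm' (hJ : IsJac s q J) (A B : V) :
    J A B * J (-A) (-B) = q * ((1 - zi A) * (1 - zi B) * (1 - zi (A + B))) := by
  by_cases hA : A = 0
  · simp [hA, hJ.left, zi]
  by_cases hB : B = 0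
  · simp [hB, hJ.right, zi]
  by_cases hAB : A + B = 0
  · simp [hAB, hJ.diag, zi]
  rw [hJ.norm A B hA hB hAB]; simp [zi, hA, hB, hAB]

/-- When both characters are opposite, the product of the two Jacobi sums is `|J|² = q`. -/
lemma IsJac.glue_all (hJ : IsJac s q J) :
    ∑ A, ∑ B, ∑ C, ∑ D, J A B * J C D * (zi (A + C) * zi (B + D)) =
      q * ((Fintype.card V - 1) * (Fintype.card V - 2)) := by
  have e : ∀ A B, ∑ C, ∑ D, J A B * J C D * (zi (A + C) * zi (B + D)) =
      q * ((1 - zi A) * (1 - zi B) * (1 - zi (A + B))) := by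
    intro A B
    have e : ∀ C D, J A B * J C D * (zi (A + C) * zi (B + D)) =
      zi (A + C) * (zi (B + D) * (J A B * J C D)) := fun C D => by ring
    simp only [e, ← mul_sum, sum_zi_add_mul', hJ.norm']
  simp only [e, ← mul_sum]
  rw [sum2 (fun a b c => (1 - a) * (1 - b) * (1 - c))]
  ring

lemma IsJac.glue_all_s (hs : IsSign s) (hJ : IsJac s q J) :
    ∑ A, ∑ B, ∑ C, ∑ D, s D * (J A B * J C D * (zi (A + C) * zi (B + D))) =
      -(q * (Fintype.card V - 2)) := by
  have e : ∀ A B, ∑ C, ∑ D, s D * (J A B * J C D * (zi (A + C) * zi (B + D))) =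
      q * (s B * ((1 - zi A) * (1 - zi B) * (1 - zi (A + B)))) := by
    intro A B
    have e : ∀ C D, s D * (J A B * J C D * (zi (A + C) * zi (B + D))) =
      zi (A + C) * (zi (B + D) * (s D * (J A B * J C D))) := fun C D => by ring
    simp only [e, ← mul_sum, sum_zi_add_mul', hJ.norm', hs.neg]
    ring
  simp only [e, ← mul_sum]
  rw [sum2y hs (fun a b c => (1 - a) * (1 - b) * (1 - c))]
  ring

end Group

/-! ### The weighted sum over a pentagon edge: terms with Jacobi sums -/

section Group

variable {V : Type} [CommRing V] [Fintype V] [DecidableEq V]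
variable {s : V → ℂ} {q : ℂ} {J : V → V → ℂ}

/-- Weight of a pentagon edge: the reciprocal of the number of vanishing pentagon forms on the
hyperplane `E = 0`, where the form `E` itself accounts for the summand `1`. -/
noncomputable def wE (A B C D : V) : ℂ := 1 / (1 + zi (A + B) + zi D + zi (B + D) + zi (A + B + C + D))

/-- On nondegenerate pairs `A + B` and `D` do not vanish, and the reciprocal becomes linear in the
indicators. -/
lemma wE_JJ (hJ : IsJac s q J) (A B C D : V) : J A B * J C D * wE A B C D =
    J A B * J C D - 1 / 2 * (J A B * J C D * zi (B + D))
      - 1 / 2 * (J A B * J C D * zi (A + B + C + D))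
      + 1 / 3 * (J A B * J C D * (zi (A + C) * zi (B + D))) := by
  by_cases h : J A B = 0
  · simp [h]
  by_cases h' : J C D = 0
  · simp [h']
  obtain ⟨hA, hB, hAB⟩ := hJ.nondeg h
  obtain ⟨hC, hD, hCD⟩ := hJ.nondeg h'
  have : wE A B C D = 1 - 1 / 2 * zi (B + D) - 1 / 2 * zi (A + B + C + D)
      + 1 / 3 * (zi (A + C) * zi (B + D)) := by
    unfold wE zi
    rw [if_neg hAB, if_neg hD]
    split_ifs <;> first | (exfalso; grind) | norm_num
  rw [this]; ring

/-- Contribution to the pentagon edge of the product of two nondegenerate Jacobi sums. -/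
lemma E1 (hs : IsSign s) (hJ : IsJac s q J) :
    ∑ A, ∑ B, ∑ C, ∑ D, J A B * J C D * wE A B C D =
      tot J ^ 2 - glue s J
        + 1 / 3 * (q * ((Fintype.card V - 1) * (Fintype.card V - 2))) := by
  simp only [wE_JJ hJ, sum_add_distrib, sum_sub_distrib, ← mul_sum (a := (1 / 2 : ℂ)),
    ← mul_sum (a := (1 / 3 : ℂ)), hJ.col2 hs, hJ.col3, hJ.glue_all]
  rw [sum_mul_sum₂ J J]
  unfold tot; ring

/-- As `A` and `B` vary, `A + B` and `Q - B` are independent. -/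
lemma sum_indep (g : ℂ → ℂ → ℂ) (Q : V) :
    ∑ A : V, ∑ B : V, g (zi (A + B)) (zi (Q - B)) =
      (Fintype.card V - 1 : ℂ) * ((Fintype.card V - 1) * g 0 0 + g 1 0)
        + ((Fintype.card V - 1) * g 0 1 + g 1 1) := by
  rw [sum_comm]
  have e : ∀ B : V, ∑ A : V, g (zi (A + B)) (zi (Q - B)) =
      (Fintype.card V - 1 : ℂ) * g 0 (zi (Q - B)) + g 1 (zi (Q - B)) := by
    intro B
    rw [← sum1 (fun x => g x (zi (Q - B)))]
    exact Equiv.sum_comp (Equiv.addRight B) (fun A => g (zi A) (zi (Q - B)))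
  simp only [e]
  rw [← Equiv.sum_comp (Equiv.subLeft Q)]
  simp only [Equiv.subLeft_apply, sub_sub_cancel]
  rw [sum1 (fun x => (Fintype.card V - 1 : ℂ) * g 0 x + g 1 x)]

/-- Contribution to the pentagon edge of the nondegenerate part of `J(A + C, B + D)`. -/
lemma E2 (hJ : IsJac s q J) :
    ∑ A, ∑ B, ∑ C, ∑ D, J (A + C) (B + D) * wE A B C D =
      (Fintype.card V ^ 2 - Fintype.card V + 1 / 3) * tot J := by
  rw [sum_shift]
  have e : ∀ P Q, J P Q * ∑ A, ∑ B, wE A B (P - A) (Q - B) =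
      J P Q * (Fintype.card V ^ 2 - Fintype.card V + 1 / 3) := by
    intro P Q
    by_cases h : J P Q = 0
    · simp [h]
    obtain ⟨hP, hQ, hPQ⟩ := hJ.nondeg h
    congr 1
    have e : ∀ A B, wE A B (P - A) (Q - B) = 1 / (1 + zi (A + B) + zi (Q - B)) := by
      intro A B
      unfold wE
      rw [show B + (Q - B) = Q by ring, show A + B + (P - A) + (Q - B) = P + Q by ring]
      simp [zi, hQ, hPQ]
    simp only [e]
    rw [sum_indep (fun a b => 1 / (1 + a + b))]
    ring
  simp only [e, ← sum_mul]
  unfold tot; ring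

/-- Contribution to the pentagon edge of the products whose second factor is degenerate. -/
lemma E3 (hs : IsSign s) (hJ : IsJac s q J) :
    ∑ A, ∑ B, J A B * ∑ C, ∑ D, del s q C D * wE A B C D =
      (q / 2 - 3 / 2 * Fintype.card V + 19 / 6) * tot J := by
  have e : ∀ A B, J A B * ∑ C, ∑ D, del s q C D * wE A B C D =
      J A B * (q / 2 - 3 / 2 * Fintype.card V + 13 / 6) + 1 / 2 * (J A B * s B)
        + 1 / 2 * (J A B * s (A + B)) := by
    intro A B
    by_cases h : J A B = 0
    · simp [h]
    obtain ⟨hA, hB, hAB⟩ := hJ.nondeg h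
    have e1 : ∀ C, wE A B C 0 = 1 / 2 - 1 / 6 * zi (A + B + C) := by
      intro C; unfold wE zi
      rw [if_neg hAB, if_pos rfl, if_neg (by simpa using hB)]
      simp only [add_zero]; split_ifs <;> norm_num
    have e2 : ∀ D, s D * wE A B 0 D = s D - 1 / 2 * (zi (B + D) * s D)
        - 1 / 2 * (zi (A + B + D) * s D) - zi D * (1 / 2 * s D) := by
      intro D; unfold wE zi
      rw [if_neg hAB, add_zero]
      split_ifs <;> first | (exfalso; grind) | ring
    have e3 : ∀ D, wE A B (-D) D = 1 - 1 / 2 * zi (B + D) - 1 / 2 * zi D := by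
      intro D; unfold wE zi
      rw [if_neg hAB, neg_add_cancel_right, if_neg hAB]
      split_ifs <;> first | (exfalso; grind) | norm_num
    have e4 : wE A B 0 0 = 1 / 2 := by
      unfold wE zi; simp [hAB, hB]; norm_num
    rw [sum_del, e4]
    simp only [e1, e2, e3, sum_sub_distrib, ← mul_sum, sum_zi_add', sum_zi_add_mul', sum_zi_mul,
      sum_zi, sum_const_V, hs.sum, hs.neg, hs.zero]
    ring
  simp only [e, sum_add_distrib, ← mul_sum, ← sum_mul, hJ.tot_right hs, hJ.tot_sum hs]
  unfold tot; ring

lemma sum_swap_blocks (g : V → V → V → V → ℂ) :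
    ∑ A, ∑ B, ∑ C, ∑ D, g A B C D = ∑ C, ∑ D, ∑ A, ∑ B, g A B C D := by
  calc _ = ∑ A, ∑ C, ∑ B, ∑ D, g A B C D := sum_congr rfl fun A _ => sum_comm
    _ = ∑ A, ∑ C, ∑ D, ∑ B, g A B C D :=
      sum_congr rfl fun A _ => sum_congr rfl fun C _ => sum_comm
    _ = ∑ C, ∑ A, ∑ D, ∑ B, g A B C D := sum_comm
    _ = _ := sum_congr rfl fun C _ => sum_comm

/-- Contribution to the pentagon edge of the products whose first factor is degenerate. -/
lemma E4 (hs : IsSign s) (hJ : IsJac s q J) :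
    ∑ C, ∑ D, J C D * ∑ A, ∑ B, del s q A B * wE A B C D =
      (q / 2 - 3 / 2 * Fintype.card V + 19 / 6) * tot J := by
  have e : ∀ C D, J C D * ∑ A, ∑ B, del s q A B * wE A B C D =
      J C D * (q / 2 - 3 / 2 * Fintype.card V + 13 / 6) + 1 / 2 * (J C D * s D)
        + 1 / 2 * (J C D * s (C + D)) := by
    intro C D
    by_cases h : J C D = 0
    · simp [h]
    obtain ⟨hC, hD, hCD⟩ := hJ.nondeg h
    have e1 : ∀ A, wE A 0 C D = 1 - 1 / 2 * zi (C + D + A) - 1 / 2 * zi A := by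
      intro A; unfold wE zi
      rw [zero_add, if_neg hD, add_zero]
      split_ifs <;> first | (exfalso; grind) | norm_num
    have e2 : ∀ B, s B * wE 0 B C D = s B - 1 / 2 * (zi (D + B) * s B)
        - 1 / 2 * (zi (C + D + B) * s B) - zi B * (1 / 2 * s B) := by
      intro B; unfold wE zi
      rw [if_neg hD, zero_add]
      split_ifs <;> first | (exfalso; grind) | ring
    have e3 : ∀ B, wE (-B) B C D = 1 / 2 - 1 / 6 * zi (D + B) := by
      intro B; unfold wE zi
      rw [neg_add_cancel, if_pos rfl, if_neg hD, zero_add, if_neg hCD]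
      split_ifs <;> first | (exfalso; grind) | norm_num
    have e4 : wE 0 0 C D = 1 / 2 := by
      unfold wE zi; simp [hCD, hD]; norm_num
    rw [sum_del, e4]
    simp only [e1, e2, e3, sum_sub_distrib, ← mul_sum, sum_zi_add', sum_zi_add_mul', sum_zi_mul,
      sum_zi, sum_const_V, hs.sum, hs.neg, hs.zero]
    ring
  simp only [e, sum_add_distrib, ← mul_sum, ← sum_mul, hJ.tot_right hs, hJ.tot_sum hs]
  unfold tot; ring

end Group

/-! ### The weighted sum over a pentagon edge: degenerate terms -/

section Group

variable {V : Type} [CommRing V] [Fintype V] [DecidableEq V]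
variable {s : V → ℂ} {q : ℂ} {J : V → V → ℂ}

lemma sum2yn (hs : IsSign s) (g : ℂ → ℂ → ℂ → ℂ) :
    ∑ x : V, ∑ y : V, s y * g (zi x) (zi y) (zi (x - y)) =
      -(Fintype.card V - 2 : ℂ) * g 0 0 0
        + (Fintype.card V - 1 : ℂ) * g 0 1 0 - g 1 0 0 - g 0 0 1 + g 1 1 1 := by
  rw [← sum2y hs g]
  refine sum_congr rfl fun x _ => ?_
  rw [← Equiv.sum_comp (Equiv.neg V)]
  simp [zi_neg, hs.neg]

lemma sum2xyn (hs : IsSign s) (g : ℂ → ℂ → ℂ → ℂ) :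
    ∑ x : V, ∑ y : V, s x * s y * g (zi x) (zi y) (zi (x - y)) =
      -(Fintype.card V - 2 : ℂ) * g 0 0 0
        + (Fintype.card V - 1 : ℂ) * g 0 0 1 - g 0 1 0 - g 1 0 0 + g 1 1 1 := by
  rw [← sum2xy hs g]
  refine sum_congr rfl fun x _ => ?_
  rw [← Equiv.sum_comp (Equiv.neg V)]
  simp [zi_neg, hs.neg]

/-- Contribution to the pentagon edge of the products of two degenerate Jacobi sums. -/
lemma E5 (hs : IsSign s) :
    ∑ A, ∑ B, del s q A B * ∑ C, ∑ D, del s q C D * wE A B C D =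
      1 / 5 * q ^ 2 - 7 / 6 * (q * Fintype.card V) + 41 / 30 * q + 2 * (Fintype.card V : ℂ) ^ 2
        - 11 / 2 * Fintype.card V + 139 / 30 := by
  have v1 (A C : V) : wE A 0 C 0 = 1 / (3 + zi A + zi (A + C)) := by
    simp only [wE, zi_zero, add_zero]; congr 1; ring
  have v2 (A D : V) : wE A 0 0 D = 1 / (1 + zi A + 2 * zi D + zi (A + D)) := by
    simp only [wE, zero_add, add_zero]; congr 1; ring
  have v3 (A D : V) : wE A 0 (-D) D = 1 / (1 + 2 * zi A + 2 * zi D) := by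
    simp only [wE, zero_add, add_zero, neg_add_cancel_right]; congr 1; ring
  have v5 (B C : V) : wE 0 B C 0 = 1 / (2 + 2 * zi B + zi (B + C)) := by
    simp only [wE, zi_zero, zero_add, add_zero]; congr 1; ring
  have v6 (B D : V) : wE 0 B 0 D = 1 / (1 + zi B + zi D + 2 * zi (B + D)) := by
    simp only [wE, zero_add, add_zero]; congr 1; ring
  have v7 (B D : V) : wE 0 B (-D) D = 1 / (1 + 2 * zi B + zi D + zi (B + D)) := by
    simp only [wE, zero_add, neg_add_cancel_right]; congr 1; ring
  have v9 (B C : V) : wE (-B) B C 0 = 1 / (3 + zi B + zi C) := by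
    simp only [wE, zi_zero, neg_add_cancel, zero_add, add_zero]; congr 1; ring
  have v10 (B D : V) : wE (-B) B 0 D = 1 / (2 + 2 * zi D + zi (B + D)) := by
    simp only [wE, zi_zero, neg_add_cancel, zero_add]; congr 1; ring
  have v11 (B D : V) : wE (-B) B (-D) D = 1 / (3 + zi D + zi (B + D)) := by
    simp only [wE, zi_zero, neg_add_cancel, zero_add]; congr 1; ring
  have ms (x : V) (f : V → ℂ) : s x * ∑ y, f y = ∑ y, s x * f y := mul_sum ..
  rw [sum_del]
  simp only [sum_del, v1, v2, v3, v5, v6, v7, v9, v10, v11, zi_zero, add_zero, zero_add,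
    mul_add, mul_sub, mul_neg, mul_left_comm (s _) (q + 1)]
  simp only [ms, ← mul_assoc (s _) (s _)]
  simp only [sum_add_distrib, sum_sub_distrib, sum_neg_distrib, ← mul_sum (a := q + 1)]
  rw [sum2 (fun a _ c => 1 / (3 + a + c)),
    sum2y hs (fun a b c => 1 / (1 + a + 2 * b + c)),
    sum2 (fun a b _ => 1 / (1 + 2 * a + 2 * b)),
    sum1 (fun a => 1 / (3 + a + a)),
    sum2x hs (fun a _ c => 1 / (2 + 2 * a + c)),
    sum2xy hs (fun a b c => 1 / (1 + a + b + 2 * c)),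
    sum2x hs (fun a b c => 1 / (1 + 2 * a + b + c)),
    sum1s hs (fun a => 1 / (2 + 2 * a + a)),
    sum2 (fun a b _ => 1 / (3 + a + b)),
    sum2y hs (fun _ b c => 1 / (2 + 2 * b + c)),
    sum2 (fun _ b c => 1 / (3 + b + c)),
    sum1 (fun a => 1 / (3 + a + 1)),
    sum1 (fun a => 1 / (3 + 1 + a)),
    sum1s hs (fun a => 1 / (1 + 1 + 2 * a + a)),
    sum1 (fun a => 1 / (1 + 2 * 1 + 2 * a))]
  norm_num
  ring_nf

/-- Contribution to the pentagon edge of the degenerate part of `J(A + C, B + D)`. -/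
lemma E6 (hs : IsSign s) :
    ∑ A, ∑ B, ∑ C, ∑ D, del s q (A + C) (B + D) * wE A B C D =
      -(Fintype.card V : ℂ) ^ 3 + (1 / 3 * q + 2) * (Fintype.card V : ℂ) ^ 2
        - (1 / 6 * q + 3 / 2) * Fintype.card V + 1 / 30 * q + 13 / 30 := by
  have w (A B P Q : V) : wE A B (P - A) (Q - B) =
      1 / (1 + zi (A + B) + zi (Q - B) + zi Q + zi (P + Q)) := by
    unfold wE
    rw [show B + (Q - B) = Q by ring, show A + B + (P - A) + (Q - B) = P + Q by ring]
  rw [sum_shift, sum_del]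
  simp only [w, neg_add_cancel, add_zero, zero_add, zi_zero]
  have e (Q : V) (x y : ℂ) : ∑ A : V, ∑ B : V, 1 / (1 + zi (A + B) + zi (Q - B) + x + y) = _ :=
    sum_indep (fun a b => 1 / (1 + a + b + x + y)) Q
  simp only [e]
  rw [sum1 (fun p => (Fintype.card V - 1 : ℂ) * ((Fintype.card V - 1) * (1 / (1 + 0 + 0 + 1 + p)) +
      1 / (1 + 1 + 0 + 1 + p)) + ((Fintype.card V - 1) * (1 / (1 + 0 + 1 + 1 + p)) +
      1 / (1 + 1 + 1 + 1 + p))),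
    sum1s hs (fun p => (Fintype.card V - 1 : ℂ) * ((Fintype.card V - 1) * (1 / (1 + 0 + 0 + p + p)) +
      1 / (1 + 1 + 0 + p + p)) + ((Fintype.card V - 1) * (1 / (1 + 0 + 1 + p + p)) +
      1 / (1 + 1 + 1 + p + p))),
    sum1 (fun p => (Fintype.card V - 1 : ℂ) * ((Fintype.card V - 1) * (1 / (1 + 0 + 0 + p + 1)) +
      1 / (1 + 1 + 0 + p + 1)) + ((Fintype.card V - 1) * (1 / (1 + 0 + 1 + p + 1)) +
      1 / (1 + 1 + 1 + p + 1)))]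
  norm_num
  ring_nf

end Group

/-! ### The weighted sum over a pentagram edge -/

section Group

variable {V : Type} [CommRing V] [Fintype V] [DecidableEq V]
variable {s : V → ℂ} {q : ℂ} {J : V → V → ℂ}

/-- Weight of a pentagram edge, transported to the hyperplane `E = 0` by the involution: it is
supported where the involution produces no vanishing pentagon form, and there it is the reciprocal
of the number of vanishing pentagram forms. -/
noncomputable def wB (A B C D : V) : ℂ :=
  (1 - zi B) * (1 - zi C) * (1 - zi D) * (1 - zi (A + B)) * (1 - zi (B + D)) /
    (1 + zi (C + D) + zi A + zi (A + B + C + D) + zi (A + C))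

lemma zi_ne {x : V} (h : x ≠ 0) : zi x = 0 := if_neg h

/-- The sum of the table twisted by the sign of the first character.  It occurs in `E2'`, `E3'` and
`E4'`, and cancels in `edge_total`. -/
def stot (s : V → ℂ) (J : V → V → ℂ) : ℂ := ∑ A, s A * ∑ B, J A B

/-- The analogue of `wE_JJ` for the pentagram edge. -/
lemma wB_JJ (hJ : IsJac s q J) (A B C D : V) : s D * (J A B * J C D * wB A B C D) =
    s D * J C D * J A B - s D * (J A B * J C D * zi (B + D))
      - 1 / 2 * (s D * (J A B * J C D * zi (A + B + C + D)))
      - 1 / 2 * (s D * (J A B * J C D * zi (A + C)))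
      + s D * (J A B * J C D * (zi (A + C) * zi (B + D))) := by
  by_cases h : J A B = 0
  · simp [h]
  by_cases h' : J C D = 0
  · simp [h']
  obtain ⟨hA, hB, hAB⟩ := hJ.nondeg h
  obtain ⟨hC, hD, hCD⟩ := hJ.nondeg h'
  have : wB A B C D = 1 - zi (B + D) - 1 / 2 * zi (A + B + C + D) - 1 / 2 * zi (A + C)
      + zi (A + C) * zi (B + D) := by
    unfold wB zi
    rw [if_neg hAB, if_neg hD, if_neg hA, if_neg hB, if_neg hC, if_neg hCD]
    split_ifs <;> first | (exfalso; grind) | norm_num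
  rw [this]; ring

/-- Contribution to the pentagram edge of the product of two nondegenerate Jacobi sums. -/
lemma E1' (hs : IsSign s) (hJ : IsJac s q J) :
    ∑ A, ∑ B, ∑ C, ∑ D, s D * (J A B * J C D * wB A B C D) =
      tot J ^ 2 - glue s J - sglue s J - q * (Fintype.card V - 2) := by
  simp only [wB_JJ hJ, sum_add_distrib, sum_sub_distrib, ← mul_sum (a := (1 / 2 : ℂ)),
    hJ.col2s hs, hJ.col3s hs, col1s, hJ.glue_all_s hs]
  have : ∑ A, ∑ B, ∑ C, ∑ D, s D * J C D * J A B = tot J ^ 2 := by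
    have e (A B C D : V) : s D * J C D * J A B = J A B * (J C D * s D) := by ring
    simp only [e]
    rw [sum_mul_sum₂ J (fun C D => J C D * s D), hJ.tot_right hs]
    unfold tot; ring
  rw [this]
  ring

/-- Contribution to the pentagram edge of the products whose second factor is degenerate. -/
lemma E2' (hs : IsSign s) (hJ : IsJac s q J) :
    ∑ A, ∑ B, J A B * ∑ C, ∑ D, del s q C D * (s D * wB A B C D) =
      tot J + 1 / 6 * stot s J := by
  have e : ∀ A B, J A B * ∑ C, ∑ D, del s q C D * (s D * wB A B C D) =
      J A B * (1 / 2) + 1 / 2 * (J A B * s B) + 1 / 6 * (s A * J A B) := by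
    intro A B
    by_cases h : J A B = 0
    · simp [h]
    obtain ⟨hA, hB, hAB⟩ := hJ.nondeg h
    have e1 : ∀ C, wB A B C 0 = 0 := by
      intro C; simp [wB, zi]
    have e2 : ∀ D, wB A B 0 D = 0 := by
      intro D; simp [wB, zi]
    have e3 : ∀ D, s D * wB A B (-D) D = 1 / 2 * s D - 1 / 2 * (zi D * s D)
        - 1 / 2 * (zi (B + D) * s D) - 1 / 6 * (zi (A - D) * s D) := by
      intro D; unfold wB zi
      rw [neg_add_cancel_right, neg_add_cancel, if_neg hAB, if_neg hA, if_neg hB,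
        ← sub_eq_add_neg, if_pos rfl]
      simp only [neg_eq_zero]
      split_ifs <;> first | (exfalso; grind) | (norm_num; try ring_nf)
    rw [sum_del]
    simp only [e1, e2, e3, sum_sub_distrib, ← mul_sum, sum_zi_add', sum_zi_add_mul', sum_zi_mul,
      sum_zi_sub_mul', sum_zi, sum_const_V, hs.sum, hs.neg, hs.zero, mul_zero, sum_const_zero]
    ring
  simp only [e, sum_add_distrib, ← mul_sum, ← sum_mul, hJ.tot_right hs]
  unfold tot stot; ring

/-- Contribution to the pentagram edge of the products whose first factor is degenerate. -/
lemma E3' (hs : IsSign s) (hJ : IsJac s q J) :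
    ∑ C, ∑ D, s D * J C D * ∑ A, ∑ B, del s q A B * wB A B C D =
      tot J + 1 / 6 * stot s J := by
  have e : ∀ C D, s D * J C D * ∑ A, ∑ B, del s q A B * wB A B C D =
      J C D * (1 / 2) + 1 / 2 * (J C D * s D) + 1 / 6 * (s C * J C D) := by
    intro C D
    by_cases h : J C D = 0
    · simp [h]
    obtain ⟨hC, hD, hCD⟩ := hJ.nondeg h
    have e1 : ∀ A, wB A 0 C D = 0 := by
      intro A; simp [wB, zi]
    have e2 : ∀ B, wB (-B) B C D = 0 := by
      intro B; simp [wB, zi]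
    have e3 : ∀ B, s B * wB 0 B C D = 1 / 2 * s B - 1 / 2 * (zi B * s B)
        - 1 / 2 * (zi (D + B) * s B) - 1 / 6 * (zi (C + D + B) * s B) := by
      intro B; unfold wB zi
      rw [zero_add, if_neg hD, if_pos rfl, if_neg hC, zero_add, if_neg hC, if_neg hCD]
      split_ifs <;> first | (exfalso; grind) | (norm_num; try ring_nf)
    rw [sum_del]
    simp only [e1, e2, e3, sum_sub_distrib, ← mul_sum, sum_zi_add', sum_zi_add_mul', sum_zi_mul,
      sum_zi_sub_mul', sum_zi, sum_const_V, hs.sum, hs.neg, hs.zero, mul_zero, sum_const_zero,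
      hs.add]
    linear_combination (1 / 2 * J C D + 1 / 6 * s C * J C D) * hs.sq D
  simp only [e, sum_add_distrib, ← mul_sum, ← sum_mul, hJ.tot_right hs]
  unfold tot stot; ring

/-- Contribution to the pentagram edge of the nondegenerate part of `J(A + C, B + D)`. -/
lemma E4' (hs : IsSign s) (hJ : IsJac s q J) :
    ∑ A, ∑ B, ∑ C, ∑ D, J (A + C) (B + D) * (s D * wB A B C D) =
      -(2 * Fintype.card V - 7) * tot J + 1 / 3 * stot s J := by
  rw [sum_shift]
  have e : ∀ P Q, J P Q * ∑ A, ∑ B, s (Q - B) * wB A B (P - A) (Q - B) =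
      J P Q * (-(Fintype.card V - 3)) - (Fintype.card V - 3) * (J P Q * s Q)
       + J P Q * s (P + Q) + 1 / 3 * (s P * J P Q) := by
    intro P Q
    by_cases h : J P Q = 0
    · simp [h]
    obtain ⟨hP, hQ, hPQ⟩ := hJ.nondeg h
    rw [sum_comm]
    have e : ∀ A B, s (Q - B) * wB A B (P - A) (Q - B) =
       s Q * (s B * ((1 - zi B - zi (B - Q)) * (1 - zi (A - P) - zi (A + B) + zi (A - P) * zi (A + B)
          - 1 / 2 * zi A - 1 / 2 * zi (A + (B - P - Q)) + 1 / 3 * (zi A * zi (A + (B - P - Q)))))) := by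
      intro A B
      rw [hs.sub]
      unfold wB
      rw [show B + (Q - B) = Q by ring, show A + B + (P - A) + (Q - B) = P + Q by ring,
        show A + (P - A) = P by ring, zi_sub_comm P A, zi_sub_comm Q B,
        show P - A + (Q - B) = -(A + (B - P - Q)) by ring, zi_neg]
      by_cases hB : B = 0
      · simp [hB, zi_zero, zi, hQ]
      by_cases hBQ : B = Q
      · simp [hBQ, zi_zero, zi, hQ]
      unfold zi
      rw [if_neg hQ, if_neg hPQ, if_neg hP, if_neg hB, if_neg (sub_ne_zero.2 hBQ)]
      split_ifs <;> first | (exfalso; grind) | (norm_num; try ring_nf)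
    have e' : ∀ B, ∑ A, s (Q - B) * wB A B (P - A) (Q - B) =
       s Q * ((Fintype.card V - 3) * s B - (Fintype.card V - 3) * (zi B * s B)
        - (Fintype.card V - 3) * (zi (B - Q) * s B)
        + zi (B + P) * s B + 1 / 3 * (zi (B - (P + Q)) * s B)) := by
      intro B
      simp only [e, ← mul_sum, sum_add_distrib, sum_sub_distrib, sum_zi_sub, sum_zi_add,
        sum_zi_sub_mul, sum_zi_mul, sum_zi, sum_const_V, zero_add]
      rw [add_comm P B, sub_sub]
      by_cases hB : B = 0
      · subst hB
        rw [zi_zero, zi_sub_comm 0 Q, sub_zero, zi_ne hQ, zero_add, zi_ne hP,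
          zi_sub_comm 0 (P + Q), sub_zero, zi_ne hPQ]
        ring
      by_cases hBQ : B = Q
      · subst hBQ
        rw [sub_self, zi_zero, zi_ne hB, add_comm B P, zi_ne hPQ, zi_sub_comm B,
          add_sub_cancel_right, zi_ne hP]
        ring
      rw [zi_ne hB, zi_ne (sub_ne_zero.2 hBQ)]
      ring
    simp only [e', ← mul_sum, sum_sub_distrib, sum_add_distrib, sum_zi_add_mul, sum_zi_mul,
      sum_zi_sub_mul, hs.sum, hs.neg, hs.zero, hs.add]
    linear_combination (J P Q * (-(Fintype.card V - 3) + 1 / 3 * s P)) * hs.sq Q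
  simp only [e, sum_add_distrib, sum_sub_distrib, ← mul_sum, ← sum_mul, hJ.tot_right hs,
    hJ.tot_sum hs]
  unfold tot stot; ring

/-- Contribution to the pentagram edge of the products of two degenerate Jacobi sums. -/
lemma E5' (hs : IsSign s) :
    ∑ A, ∑ B, del s q A B * ∑ C, ∑ D, del s q C D * (s D * wB A B C D) =
      -(Fintype.card V - 2) / 3 := by
  have e1 (A B C : V) : wB A B C 0 = 0 := by simp [wB, zi]
  have e2 (A B D : V) : wB A B 0 D = 0 := by simp [wB, zi]
  have e3 (B C D : V) : wB (-B) B C D = 0 := by simp [wB, zi]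
  have e4 (A C D : V) : wB A 0 C D = 0 := by simp [wB, zi]
  have e5 (B D : V) : wB 0 B (-D) D = (1 - zi B) * (1 - zi D) * (1 - zi (B + D)) / 3 := by
    by_cases hB : B = 0
    · simp [hB, zi_zero, wB]
    by_cases hD : D = 0
    · simp [hD, zi_zero, wB]
    simp [wB, zi, hB, hD]; norm_num
  rw [sum_del]
  simp only [sum_del, e1, e2, e3, e4, e5, mul_zero, sum_const_zero]
  have ms (x : V) (f : V → ℂ) : s x * ∑ y, f y = ∑ y, s x * f y := mul_sum ..
  simp only [sub_zero, zero_sub, add_zero, neg_zero, mul_neg, ms, sum_neg_distrib, neg_neg,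
    ← mul_assoc (s _) (s _)]
  rw [sum2xy hs (fun a b c => (1 - a) * (1 - b) * (1 - c) / 3)]
  ring

/-- Contribution to the pentagram edge of the degenerate part of `J(A + C, B + D)`. -/
lemma E6' (hs : IsSign s) :
    ∑ A, ∑ B, ∑ C, ∑ D, del s q (A + C) (B + D) * (s D * wB A B C D) =
      (Fintype.card V - 2) * (Fintype.card V - 2 - 1 / 3) := by
  have w (A B P Q : V) : wB A B (P - A) (Q - B) =
      (1 - zi B) * (1 - zi (A - P)) * (1 - zi (Q - B)) * (1 - zi (A + B)) * (1 - zi Q) /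
        (1 + zi (A + (B - Q - P)) + zi A + zi (P + Q) + zi P) := by
    unfold wB
    rw [show B + (Q - B) = Q by ring, show A + B + (P - A) + (Q - B) = P + Q by ring,
      show A + (P - A) = P by ring, zi_sub_comm P A,
      show P - A + (Q - B) = -(A + (B - Q - P)) by ring, zi_neg]
  have c1 (Q B : V) : ∑ A, wB A B (0 - A) (Q - B) =
      (1 - zi Q) * (1 - zi B) * (1 - zi (Q - B)) * ((Fintype.card V - 2) / 2 - 1 / 6) := by
    by_cases hB : B = 0
    · simp only [w]; simp [hB, zi_zero]
    by_cases hQ : Q = 0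
    · simp only [w]; simp [hQ, zi_zero]
    by_cases hQB : Q = B
    · simp only [w]; simp [hQB, zi_zero]
    have (A : V) : wB A B (0 - A) (Q - B) = 1 / 2 - 1 / 2 * zi A - 1 / 2 * zi (A + B)
        - 1 / 6 * zi (A + (B - Q)) := by
      rw [w]
      simp only [sub_zero, zero_add]
      unfold zi
      rw [if_neg hB, if_neg hQ, if_neg (sub_ne_zero.2 hQB)]
      split_ifs <;> first | (exfalso; grind) | norm_num
    simp only [this, sum_sub_distrib, ← mul_sum, sum_zi, sum_zi_add, sum_const_V]
    unfold zi
    rw [if_neg hB, if_neg hQ, if_neg (sub_ne_zero.2 hQB)]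
    ring
  have c2 (Q B : V) : ∑ A, wB A B (-Q - A) (Q - B) =
      (1 - zi Q) * (1 - zi B) * (1 - zi (Q - B)) * ((Fintype.card V - 2) / 2 - 1 / 6) := by
    by_cases hB : B = 0
    · simp only [w]; simp [hB, zi_zero]
    by_cases hQ : Q = 0
    · simp only [w]; simp [hQ, zi_zero]
    by_cases hQB : Q = B
    · simp only [w]; simp [hQB, zi_zero]
    have (A : V) : wB A B (-Q - A) (Q - B) = 1 / 2 - 1 / 2 * zi (A + Q) - 1 / 2 * zi (A + B)
        - 1 / 6 * zi A := by
      rw [w]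
      simp only [sub_neg_eq_add, neg_add_cancel, sub_add_cancel, zi_neg]
      unfold zi
      rw [if_neg hB, if_neg hQ, if_neg (sub_ne_zero.2 hQB)]
      split_ifs <;> first | (exfalso; grind) | norm_num
    simp only [this, sum_sub_distrib, ← mul_sum, sum_zi, sum_zi_add, sum_const_V]
    unfold zi
    rw [if_neg hB, if_neg hQ, if_neg (sub_ne_zero.2 hQB)]
    ring
  have c3 (A B P : V) : wB A B (P - A) (0 - B) = 0 := by simp only [w]; simp [zi_zero]
  have f1 (Q : V) : ∑ A, ∑ B, s (Q - B) * wB A B (0 - A) (Q - B) = ∑ B, s (Q - B) *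
      ((1 - zi Q) * (1 - zi B) * (1 - zi (Q - B)) * ((Fintype.card V - 2) / 2 - 1 / 6)) := by
    rw [sum_comm]; simp only [← mul_sum, c1]
  have f2 (Q : V) : ∑ A, ∑ B, s (Q - B) * wB A B (-Q - A) (Q - B) = ∑ B, s (Q - B) *
      ((1 - zi Q) * (1 - zi B) * (1 - zi (Q - B)) * ((Fintype.card V - 2) / 2 - 1 / 6)) := by
    rw [sum_comm]; simp only [← mul_sum, c2]
  rw [sum_shift, sum_del]
  have ms (x : V) (f : V → ℂ) : s x * ∑ y, f y = ∑ y, s x * f y := mul_sum ..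
  simp only [c3, mul_zero, sum_const_zero, f1, f2]
  simp only [ms, hs.sub, ← mul_assoc (s _) (s _ * s _),
    ← mul_assoc (s _) (s _) (s _), hs.sq, one_mul]
  rw [sum2yn hs (fun a b c => (1 - a) * (1 - b) * (1 - c) * ((Fintype.card V - 2) / 2 - 1 / 6)),
    sum2xyn hs (fun a b c => (1 - a) * (1 - b) * (1 - c) * ((Fintype.card V - 2) / 2 - 1 / 6))]
  ring

end Group

/-! ### Both edges together -/

section Group

variable {V : Type} [CommRing V] [Fintype V] [DecidableEq V]
variable {s : V → ℂ} {q : ℂ} {J : V → V → ℂ}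

/-- The five-character sum at `E = 0` in terms of Jacobi sums, nondegenerate part plus
degenerate part. -/
def fE (s : V → ℂ) (q : ℂ) (J : V → V → ℂ) (A B C D : V) : ℂ :=
  (J A B + del s q A B) * (J C D + del s q C D) - (J (A + C) (B + D) + del s q (A + C) (B + D))

lemma sum4_push (g : V → V → ℂ) (h : V → V → V → V → ℂ) :
    ∑ A, ∑ B, ∑ C, ∑ D, g A B * h A B C D = ∑ A, ∑ B, g A B * ∑ C, ∑ D, h A B C D := by
  simp only [mul_sum]

lemma sum_fE (w : V → V → V → V → ℂ) :
    ∑ A, ∑ B, ∑ C, ∑ D, fE s q J A B C D * w A B C D =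
      (∑ A, ∑ B, ∑ C, ∑ D, J A B * J C D * w A B C D)
      + (∑ A, ∑ B, J A B * ∑ C, ∑ D, del s q C D * w A B C D)
      + (∑ C, ∑ D, J C D * ∑ A, ∑ B, del s q A B * w A B C D)
      + (∑ A, ∑ B, del s q A B * ∑ C, ∑ D, del s q C D * w A B C D)
      - (∑ A, ∑ B, ∑ C, ∑ D, J (A + C) (B + D) * w A B C D)
      - (∑ A, ∑ B, ∑ C, ∑ D, del s q (A + C) (B + D) * w A B C D) := by
  have h3 : ∑ C, ∑ D, J C D * ∑ A, ∑ B, del s q A B * w A B C D =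
      ∑ A, ∑ B, ∑ C, ∑ D, J C D * (del s q A B * w A B C D) := by
    rw [sum_swap_blocks]; simp only [mul_sum]
  rw [h3]
  simp only [mul_sum, ← sum_add_distrib, ← sum_sub_distrib]
  refine sum_congr rfl fun A _ => sum_congr rfl fun B _ => sum_congr rfl fun C _ =>
    sum_congr rfl fun D _ => ?_
  unfold fE; ring

/-- Total weight carried by a pentagon edge and a pentagram edge. -/
lemma edge_total (hs : IsSign s) (hJ : IsJac s q J) :
    (∑ A, ∑ B, ∑ C, ∑ D, fE s q J A B C D * wE A B C D)
      + (∑ A, ∑ B, ∑ C, ∑ D, fE s q J A B C D * (s D * wB A B C D)) =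
    2 * tot J ^ 2 + (q - (Fintype.card V : ℂ) ^ 2 + 1) * tot J
      - 2 * (glue s J - (Fintype.card V - 1) * (Fintype.card V - 2) * q)
      - (sglue s J + q * (Fintype.card V - 2))
      + (q ^ 2 - 10 * (Fintype.card V - 1 : ℂ) ^ 2 * q
        + 5 * (Fintype.card V : ℂ) ^ 2 * (Fintype.card V - 1) + 1) / 5 := by
  rw [sum_fE, sum_fE, E1 hs hJ, E2 hJ, E3 hs hJ, E4 hs hJ, E5 hs, E6 hs, E2' hs hJ, E4' hs hJ,
    E5' hs, E6' hs]
  have h1 := E1' hs hJ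
  have h3 := E3' hs hJ
  have e1 (A B C D : V) : J A B * J C D * (s D * wB A B C D) =
    s D * (J A B * J C D * wB A B C D) := by ring
  have e3 : ∑ C, ∑ D, J C D * ∑ A, ∑ B, del s q A B * (s D * wB A B C D) =
      ∑ C, ∑ D, s D * J C D * ∑ A, ∑ B, del s q A B * wB A B C D := by
    refine sum_congr rfl fun C _ => sum_congr rfl fun D _ => ?_
    simp only [mul_sum]
    refine sum_congr rfl fun A _ => sum_congr rfl fun B _ => ?_
    ring
  simp only [e1]
  rw [h1, e3, h3]
  ring

end Group

/-! ### Powers of an odd character and their Jacobi sums -/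

section Chars

variable {F : Type} [Field F] [Fintype F] [DecidableEq F] {k : ℕ} [NeZero k] {χ : MulChar F ℂ}

/-- The hypotheses on `χ`: it has order `k` and is odd. -/
structure Good (k : ℕ) (χ : MulChar F ℂ) : Prop where
  ord : orderOf χ = k
  neg : χ (-1) = -1

/-- The power of `χ` with exponent in `ℤ/kℤ`. -/
noncomputable def Psi (χ : MulChar F ℂ) (t : ZMod k) : MulChar F ℂ := χ ^ t.val

/-- The sign `(-1)^t` for `t` in `ℤ/kℤ`, realised as `χ^t(-1)`. -/
noncomputable def sg (χ : MulChar F ℂ) (t : ZMod k) : ℂ := Psi χ t (-1)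

lemma Good.natCast (h : Good k χ) (n : ℕ) : Psi χ (n : ZMod k) = χ ^ n := by
  rw [Psi, ZMod.val_natCast]
  conv_rhs => rw [← pow_mod_orderOf, h.ord]

lemma Good.intCast (h : Good k χ) (n : ℤ) : Psi χ (n : ZMod k) = χ ^ n := by
  have : ((n : ZMod k).val : ℤ) = n % k := ZMod.val_intCast n
  rw [Psi, ← zpow_natCast, this]
  conv_rhs => rw [← zpow_mod_orderOf, h.ord]

lemma Good.add (h : Good k χ) (s t : ZMod k) : Psi χ (s + t) = Psi χ s * Psi χ t := by
  have := h.natCast (s.val + t.val)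
  rw [Nat.cast_add, ZMod.natCast_zmod_val, ZMod.natCast_zmod_val] at this
  rw [this, pow_add]; rfl

lemma Psi_zero : Psi χ (0 : ZMod k) = 1 := by simp [Psi]

lemma Good.psi_neg (h : Good k χ) (t : ZMod k) : Psi χ (-t) = (Psi χ t)⁻¹ := by
  rw [eq_inv_iff_mul_eq_one, ← h.add, neg_add_cancel, Psi_zero]

lemma Good.eq_one (h : Good k χ) {t : ZMod k} : Psi χ t = 1 ↔ t = 0 := by
  rw [Psi, ← orderOf_dvd_iff_pow_eq_one, h.ord]
  constructor
  · intro hd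
    exact (ZMod.val_eq_zero t).1 (Nat.eq_zero_of_dvd_of_lt hd t.val_lt)
  · rintro rfl; simp

lemma Good.add_apply (h : Good k χ) (s t : ZMod k) (x : F) :
    Psi χ (s + t) x = Psi χ s x * Psi χ t x := by rw [h.add, MulChar.mul_apply]

lemma Good.neg_apply (h : Good k χ) (t : ZMod k) (x : F) : Psi χ (-t) x = Psi χ t x⁻¹ := by
  rw [h.psi_neg, MulChar.inv_apply']

lemma Good.mul_neg_apply (h : Good k χ) (t : ZMod k) {x : F} (hx : x ≠ 0) :
    Psi χ t x * Psi χ (-t) x = 1 := by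
  rw [h.neg_apply, ← map_mul, mul_inv_cancel₀ hx, map_one]

lemma psi_neg_arg (t : ZMod k) (x : F) : Psi χ t (-x) = sg χ t * Psi χ t x := by
  rw [sg, ← map_mul, neg_one_mul]

lemma Good.sg_natCast (h : Good k χ) (n : ℕ) : sg χ (n : ZMod k) = (-1) ^ n := by
  have : (χ ^ n) ((-1 : Fˣ) : F) = χ ((-1 : Fˣ) : F) ^ n := MulChar.pow_apply_coe χ n (-1)
  rw [sg, h.natCast]
  simpa [h.neg] using this

lemma Good.isSign (h : Good k χ) : IsSign (sg χ : ZMod k → ℂ) := by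
  have hadd : ∀ x y : ZMod k, sg χ (x + y) = sg χ x * sg χ y := fun x y => h.add_apply x y _
  refine ⟨?_, hadd, ?_, ?_⟩
  · simp [sg, Psi_zero, MulChar.one_apply isUnit_one.neg]
  · intro x
    rw [sg, ← map_mul]; simp
  · have h1 : sg χ (1 : ZMod k) = -1 := by simpa using h.sg_natCast 1
    have : ∑ x : ZMod k, sg χ x = -∑ x : ZMod k, sg χ x := by
      conv_lhs => rw [← Equiv.sum_comp (Equiv.addRight (1 : ZMod k))]
      simp only [Equiv.coe_addRight, hadd, h1, mul_neg, mul_one, sum_neg_distrib]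
    exact self_eq_neg.1 this

/-- The Jacobi sum `∑_a ψ_A(a) ψ_B(a - 1)`. -/
noncomputable def JF (χ : MulChar F ℂ) (A B : ZMod k) : ℂ := ∑ a : F, Psi χ A a * Psi χ B (a - 1)

/-- The table of Jacobi sums cut off to the nondegenerate pairs. -/
noncomputable def Jc (χ : MulChar F ℂ) (A B : ZMod k) : ℂ :=
  if A = 0 ∨ B = 0 ∨ A + B = 0 then 0 else JF χ A B

lemma jac_eq (A B : MulChar F ℂ) : jac A B = jacobiSum A B := rfl

lemma JF_eq_jac (A B : ZMod k) : JF χ A B = sg χ B * jac (Psi χ A) (Psi χ B) := by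
  simp only [JF, jac, mul_sum]
  refine sum_congr rfl fun a _ => ?_
  rw [← neg_sub, psi_neg_arg]; ring

/-- The values of the degenerate Jacobi sums. -/
lemma Good.JF_eq (h : Good k χ) (A B : ZMod k) :
    JF χ A B = Jc χ A B + del (sg χ) (Fintype.card F) A B := by
  have hs : IsSign (sg χ : ZMod k → ℂ) := h.isSign
  by_cases hA : A = 0
  · subst hA
    by_cases hB : B = 0
    · subst hB
      rw [JF_eq_jac, jac_eq, Psi_zero, jacobiSum_one_one, Jc, if_pos (Or.inl rfl), del]
      simp only [zero_add, zi_zero, hs.zero]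
      ring
    · rw [JF_eq_jac, jac_eq, Psi_zero, jacobiSum_one_nontrivial (mt h.eq_one.1 hB), Jc,
        if_pos (Or.inl rfl), del]
      simp only [zero_add, zi_zero, zi_ne hB]
      ring
  by_cases hB : B = 0
  · subst hB
    rw [JF_eq_jac, jac_eq, Psi_zero, jacobiSum_comm, jacobiSum_one_nontrivial (mt h.eq_one.1 hA),
      Jc, if_pos (Or.inr (Or.inl rfl)), del]
    simp only [add_zero, zi_zero, zi_ne hA, hs.zero]
    ring
  by_cases hAB : A + B = 0
  · obtain rfl : B = -A := by linear_combination hAB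
    rw [JF_eq_jac, jac_eq, h.psi_neg, jacobiSum_nontrivial_inv (mt h.eq_one.1 hA), Jc,
      if_pos (Or.inr (Or.inr hAB)), del, hAB, zi_zero, zi_ne hA, zi_ne hB, hs.neg,
      show Psi χ A (-1) = sg χ A from rfl]
    linear_combination - hs.sq A
  · rw [Jc, if_neg (by tauto), del, zi_ne hA, zi_ne hB, zi_ne hAB]; ring

lemma Good.isJac (h : Good k χ) : IsJac (sg χ) (Fintype.card F) (Jc χ : ZMod k → ZMod k → ℂ) := by
  have hs : IsSign (sg χ : ZMod k → ℂ) := h.isSign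
  refine ⟨fun B => by simp [Jc], fun A => by simp [Jc], fun A B e => by simp [Jc, e], ?_, ?_, ?_⟩
  · intro A B
    by_cases hd : A = 0 ∨ B = 0 ∨ A + B = 0
    · rw [Jc, Jc, if_pos hd, if_pos (by rw [add_comm]; tauto), mul_zero]
    rw [Jc, Jc, if_neg hd, if_neg (by rw [add_comm]; tauto), JF, JF, mul_sum,
      ← Equiv.sum_comp (Equiv.subLeft (1 : F))]
    refine sum_congr rfl fun a _ => ?_
    rw [Equiv.subLeft_apply, show 1 - a - 1 = -a by ring, ← neg_sub a 1, psi_neg_arg, psi_neg_arg,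
      hs.add]
    ring
  · intro A B
    have hiff : (-A - B = 0 ∨ B = 0 ∨ -A - B + B = 0) ↔ (A = 0 ∨ B = 0 ∨ A + B = 0) := by
      rw [show -A - B = -(A + B) by ring, show -(A + B) + B = -A by ring, neg_eq_zero, neg_eq_zero]
      tauto
    by_cases hd : A = 0 ∨ B = 0 ∨ A + B = 0
    · rw [Jc, Jc, if_pos hd, if_pos (hiff.2 hd), mul_zero]
    rw [Jc, Jc, if_neg hd, if_neg (mt hiff.1 hd), JF, JF, mul_sum,
      ← Equiv.sum_comp (Equiv.inv F)]
    refine sum_congr rfl fun a _ => ?_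
    simp only [Equiv.inv_apply]
    by_cases ha : a = 0
    · simp [ha, MulChar.map_zero]
    rw [show a⁻¹ - 1 = (-(a - 1)) * a⁻¹ by field_simp; ring, map_mul, psi_neg_arg, ← h.neg_apply,
      ← h.neg_apply, show -A - B = -A + -B by ring, h.add_apply]
    ring
  · intro A B hA hB hAB
    have hd : ¬ (A = 0 ∨ B = 0 ∨ A + B = 0) := by tauto
    have hd' : ¬ (-A = 0 ∨ -B = 0 ∨ -A + -B = 0) := by
      rw [neg_eq_zero, neg_eq_zero, ← neg_add, neg_eq_zero]; exact hd
    rw [Jc, Jc, if_neg hd, if_neg hd', JF_eq_jac, JF_eq_jac, jac_eq, jac_eq, h.psi_neg, h.psi_neg,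
      hs.neg]
    have hp : ringChar ℂ ≠ ringChar F := by
      rw [(ringChar.eq_zero : ringChar ℂ = 0)]
      exact (CharP.ringChar_ne_zero_of_finite F).symm
    have := jacobiSum_mul_jacobiSum_inv hp (mt h.eq_one.1 hA) (mt h.eq_one.1 hB)
      (by rw [← h.add]; exact mt h.eq_one.1 hAB)
    linear_combination (sg χ B * sg χ B) * this + Fintype.card F * hs.sq B

end Chars

/-! ### The character sums `R`, `S` and `S⁻` -/

section Translate

variable {F : Type} [Field F] [Fintype F] [DecidableEq F] {k : ℕ} {χ : MulChar F ℂ}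

/-- The kernel of a character of order `k` of the cyclic group of units is the group of
`k`-th powers. -/
lemma char_eq_one_iff (hord : orderOf χ = k) {x : F} (hx : x ≠ 0) :
    χ x = 1 ↔ ∃ c : F, c ≠ 0 ∧ x = c ^ k := by
  constructor
  · intro h1
    obtain ⟨g, hg⟩ := IsCyclic.exists_generator (α := Fˣ)
    obtain ⟨n, hn⟩ := (Submonoid.mem_powers_iff _ _).1
      ((mem_powers_iff_mem_zpowers).2 (hg (Units.mk0 x hx)))
    have hx' : x = (g : F) ^ n := by
      have := congrArg Units.val hn
      simpa using this.symm
    have hkn : k ∣ n := by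
      rw [← hord]
      refine orderOf_dvd_of_pow_eq_one ((MulChar.eq_iff hg _ _).2 ?_)
      rw [MulChar.pow_apply_coe, MulChar.one_apply_coe, ← map_pow, ← hx', h1]
    obtain ⟨m, rfl⟩ := hkn
    exact ⟨(g : F) ^ m, pow_ne_zero _ g.ne_zero, by rw [hx', ← pow_mul, mul_comm]⟩
  · rintro ⟨c, hc, rfl⟩
    have := MulChar.pow_apply_coe χ k (Units.mk0 c hc)
    rw [map_pow]
    simp only [Units.val_mk0] at this
    rw [← this, ← hord, pow_orderOf_eq_one, MulChar.one_apply hc.isUnit]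

/-- If `-1 = c ^ k`, raising to the power `(q - 1) / k`, which is odd, gives
`-1 = c ^ (q - 1) = 1`, although `q` is odd. -/
lemma neg_one_not_pow {q : ℕ} (hkeven : Even k) (hq : Fintype.card F = q)
    (hmod : q % (2 * k) = k + 1) (c : F) (hc : c ≠ 0) : (-1 : F) ≠ c ^ k := by
  intro h
  have hq' : q = 2 * k * (q / (2 * k)) + (k + 1) := by rw [← hmod, Nat.div_add_mod]
  have h1 := FiniteField.pow_card_sub_one_eq_one c hc
  have e : q - 1 = k * (2 * (q / (2 * k)) + 1) := by
    conv_lhs => rw [hq']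
    rw [← add_assoc, Nat.add_sub_cancel]; ring
  rw [hq, e, pow_mul, ← h, pow_succ, pow_mul] at h1
  have hchar : ringChar F ≠ 2 := by
    intro h2
    have := FiniteField.even_card_of_char_two h2
    obtain ⟨j, rfl⟩ := hkeven
    rw [hq, hq', show 2 * (j + j) * (q / (2 * (j + j))) + (j + j + 1) =
      2 * ((j + j) * (q / (2 * (j + j))) + j) + 1 by ring] at this
    omega
  exact Ring.neg_one_ne_one_of_char_ne_two hchar (by simpa using h1)

lemma good_of {q : ℕ} (hkeven : Even k) (hq : Fintype.card F = q)
    (hmod : q % (2 * k) = k + 1) (hχ : orderOf χ = k) : Good k χ := by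
  refine ⟨hχ, ?_⟩
  have h1 : χ (-1) * χ (-1) = 1 := by rw [← map_mul]; simp
  refine (mul_self_eq_one_iff.1 h1).resolve_left fun h => ?_
  obtain ⟨c, hc, e⟩ := (char_eq_one_iff hχ (neg_ne_zero.2 one_ne_zero)).1 h
  exact neg_one_not_pow hkeven hq hmod c hc e

variable [NeZero k]

lemma sum_range_zmod (g : ZMod k → ℂ) : ∑ i ∈ range k, g (i : ZMod k) = ∑ t, g t := by
  refine sum_bij (fun i _ => (i : ZMod k)) (fun _ _ => mem_univ _) ?_ ?_ (fun _ _ => rfl)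
  · intro i hi j hj h
    rw [mem_range] at hi hj
    have := congrArg ZMod.val h
    rwa [ZMod.val_natCast_of_lt hi, ZMod.val_natCast_of_lt hj] at this
  · intro t _
    exact ⟨t.val, mem_range.2 t.val_lt, ZMod.natCast_zmod_val t⟩

lemma sum_Icc_zmod (g : ZMod k → ℂ) :
    ∑ i ∈ Icc 1 (k - 1), g (i : ZMod k) = ∑ t, (1 - zi t) * g t := by
  rw [← sum_range_zmod (fun t => (1 - zi t) * g t)]
  have hk : 0 < k := NeZero.pos k
  have hset : range k = insert 0 (Icc 1 (k - 1)) := by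
    ext i; simp only [mem_range, mem_insert, mem_Icc]; omega
  rw [hset, sum_insert (by simp), Nat.cast_zero, zi_zero, sub_self, zero_mul, zero_add]
  refine sum_congr rfl fun i hi => ?_
  have hne : (i : ZMod k) ≠ 0 := by
    rw [mem_Icc] at hi
    rw [Ne, ZMod.natCast_eq_zero_iff]
    exact Nat.not_dvd_of_pos_of_lt (by omega) (by omega)
  rw [zi_ne hne, sub_zero, one_mul]

/-- A nondegenerate Jacobi sum in terms of the table `Jc`. -/
lemma Good.jac_cut (h : Good k χ) (s t : ZMod k) :
    (1 - zi s) * (1 - zi t) * (1 - zi (s + t)) * jac (Psi χ s) (Psi χ t) = sg χ t * Jc χ s t := by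
  have hs : IsSign (sg χ : ZMod k → ℂ) := h.isSign
  have hJ : IsJac (sg χ) (Fintype.card F) (Jc χ : ZMod k → ZMod k → ℂ) := h.isJac
  by_cases hA : s = 0
  · simp [hA, hJ.left, zi]
  by_cases hB : t = 0
  · simp [hB, hJ.right, zi]
  by_cases hAB : s + t = 0
  · simp [hAB, hJ.diag, zi]
  rw [zi_ne hA, zi_ne hB, zi_ne hAB, Jc, if_neg (by tauto), JF_eq_jac]
  linear_combination (- jac (Psi χ s) (Psi χ t)) * hs.sq t

lemma ite_ne_zi (x : ZMod k) (z : ℂ) : (if x ≠ 0 then z else 0) = (1 - zi x) * z := by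
  by_cases h : x = 0 <;> simp [h, zi]

lemma Good.Rk_eq (h : Good k χ) : Rk k χ = tot (Jc χ : ZMod k → ZMod k → ℂ) := by
  have hs : IsSign (sg χ : ZMod k → ℂ) := h.isSign
  have hJ : IsJac (sg χ) (Fintype.card F) (Jc χ : ZMod k → ZMod k → ℂ) := h.isJac
  rw [← hJ.tot_right hs, Rk]
  simp only [ite_ne_zi, ← h.natCast]
  rw [sum_Icc_zmod (fun s => ∑ t ∈ Icc 1 (k - 1), (1 - zi (s + (t : ZMod k))) *
    jac (Psi χ s) (Psi χ (t : ZMod k)))]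
  refine sum_congr rfl fun s _ => ?_
  rw [sum_Icc_zmod (fun t => (1 - zi (s + t)) * jac (Psi χ s) (Psi χ t)), mul_sum]
  refine sum_congr rfl fun t _ => ?_
  linear_combination h.jac_cut s t

/-- The triple sums `S` and `S⁻` in terms of the table `Jc`, with an arbitrary weight. -/
lemma Good.triple (h : Good k χ) (w : ZMod k → ZMod k → ℂ) :
    (∑ s ∈ Icc 1 (k - 1), ∑ t ∈ Icc 1 (k - 1), ∑ v ∈ Icc 1 (k - 1),
      if (s : ZMod k) + t ≠ 0 ∧ (v : ZMod k) + t ≠ 0 ∧ (v : ZMod k) - s ≠ 0 then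
        w s t * (jac (χ ^ s) (χ ^ t) * jac (χ⁻¹ ^ s) (χ ^ v)) else 0) =
    (∑ s, ∑ t, w s t * (sg χ t * Jc χ s t) * srow (sg χ) (Jc χ) (-s))
      - Fintype.card F * ∑ s, ∑ t, w s t * ((1 - zi s) * (1 - zi t) * (1 - zi (s + t))) := by
  have hs : IsSign (sg χ : ZMod k → ℂ) := h.isSign
  have hJ : IsJac (sg χ) (Fintype.card F) (Jc χ : ZMod k → ZMod k → ℂ) := h.isJac
  have hinv (s : ℕ) : χ⁻¹ ^ s = Psi χ (-(s : ZMod k)) := by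
    rw [h.psi_neg, h.natCast, inv_pow]
  have hite (x y z : ZMod k) (c : ℂ) : (if x ≠ 0 ∧ y ≠ 0 ∧ z ≠ 0 then c else 0) =
      (1 - zi x) * (1 - zi y) * (1 - zi z) * c := by
    by_cases hx : x = 0 <;> by_cases hy : y = 0 <;> by_cases hz : z = 0 <;> simp [hx, hy, hz, zi]
  simp only [hite, hinv, ← h.natCast]
  rw [sum_Icc_zmod (fun s => ∑ t ∈ Icc 1 (k - 1), ∑ v ∈ Icc 1 (k - 1),
    (1 - zi (s + (t : ZMod k))) * (1 - zi ((v : ZMod k) + (t : ZMod k))) *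
      (1 - zi ((v : ZMod k) - s)) * (w s t * (jac (Psi χ s) (Psi χ (t : ZMod k)) *
        jac (Psi χ (-s)) (Psi χ (v : ZMod k)))))]
  rw [mul_sum, ← sum_sub_distrib]
  refine sum_congr rfl fun s _ => ?_
  rw [sum_Icc_zmod (fun t => ∑ v ∈ Icc 1 (k - 1),
    (1 - zi (s + t)) * (1 - zi ((v : ZMod k) + t)) *
      (1 - zi ((v : ZMod k) - s)) * (w s t * (jac (Psi χ s) (Psi χ t) *
        jac (Psi χ (-s)) (Psi χ (v : ZMod k)))))]
  rw [mul_sum, mul_sum, ← sum_sub_distrib]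
  refine sum_congr rfl fun t _ => ?_
  rw [sum_Icc_zmod (fun v => (1 - zi (s + t)) * (1 - zi (v + t)) *
      (1 - zi (v - s)) * (w s t * (jac (Psi χ s) (Psi χ t) *
        jac (Psi χ (-s)) (Psi χ v))))]
  have e (v : ZMod k) : (1 - zi s) * ((1 - zi t) * ((1 - zi v) * ((1 - zi (s + t)) *
      (1 - zi (v + t)) * (1 - zi (v - s)) * (w s t * (jac (Psi χ s) (Psi χ t) *
        jac (Psi χ (-s)) (Psi χ v)))))) =
      w s t * (sg χ t * Jc χ s t) * (sg χ v * Jc χ (-s) v) -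
        zi (v + t) * (w s t * (sg χ t * Jc χ s t) * (sg χ v * Jc χ (-s) v)) := by
    rw [← h.jac_cut s t, ← h.jac_cut (-s) v, zi_neg, show -s + v = v - s by ring]
    have hz : zi s * zi s = zi s := by unfold zi; split_ifs <;> simp
    linear_combination (-(1 - zi t) * (1 - zi v) * (1 - zi (s + t)) *
      (1 - zi (v + t)) * (1 - zi (v - s)) * (w s t * (jac (Psi χ s) (Psi χ t) *
        jac (Psi χ (-s)) (Psi χ v)))) * hz
  simp only [mul_sum, e, sum_sub_distrib, sum_zi_add_mul]
  rw [← mul_sum]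
  have := hJ.norm' s t
  rw [hs.neg]
  unfold srow
  linear_combination (-(w s t) * sg χ t * sg χ t) * this -
    (w s t * Fintype.card F * ((1 - zi s) * (1 - zi t) * (1 - zi (s + t)))) * hs.sq t

lemma Good.Sk_eq (h : Good k χ) : Sk k χ =
    glue (sg χ) (Jc χ : ZMod k → ZMod k → ℂ) - ((k : ℂ) - 1) * (k - 2) * Fintype.card F := by
  have := h.triple (fun _ _ => 1)
  simp only [one_mul] at this
  rw [Sk, this, sum2 (fun a b c => (1 - a) * (1 - b) * (1 - c)), ZMod.card]
  simp only [← sum_mul]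
  unfold glue
  simp only [srow]
  ring

lemma Good.Smk_eq (h : Good k χ) : Smk k χ =
    sglue (sg χ) (Jc χ : ZMod k → ZMod k → ℂ) + Fintype.card F * ((k : ℂ) - 2) := by
  have hs : IsSign (sg χ : ZMod k → ℂ) := h.isSign
  have hJ : IsJac (sg χ) (Fintype.card F) (Jc χ : ZMod k → ZMod k → ℂ) := h.isJac
  have := h.triple (fun s t => sg χ s * sg χ t)
  have e (s t : ℕ) : (-1 : ℂ) ^ (s + t) = sg χ (s : ZMod k) * sg χ (t : ZMod k) := by
    rw [h.sg_natCast, h.sg_natCast, pow_add]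
  simp only [Smk, e]
  rw [this, sum2xy hs (fun a b c => (1 - a) * (1 - b) * (1 - c)), ZMod.card]
  have e2 : ∑ s : ZMod k, ∑ t, sg χ s * sg χ t * (sg χ t * Jc χ s t) * srow (sg χ) (Jc χ) (-s) =
      sglue (sg χ) (Jc χ : ZMod k → ZMod k → ℂ) := by
    unfold sglue
    refine sum_congr rfl fun s _ => ?_
    have h1 := hJ.s_mul_srow hs (-s)
    rw [hs.neg] at h1
    rw [row, sum_mul]
    refine sum_congr rfl fun t _ => ?_
    linear_combination (Jc χ s t) * h1 +
      (sg χ s * Jc χ s t * srow (sg χ) (Jc χ) (-s)) * hs.sq t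
  rw [e2]
  ring

end Translate

/-! ### Symmetry of order five and the partition of unity -/

section FiveSum

variable {V : Type} [CommRing V] [Fintype V] [DecidableEq V]

lemma sum5_equiv (e : V × V × V × V × V ≃ V × V × V × V × V)
    (g : V × V × V × V × V → ℂ) :
    ∑ A, ∑ B, ∑ C, ∑ D, ∑ E, g (e (A, B, C, D, E)) = ∑ A, ∑ B, ∑ C, ∑ D, ∑ E, g (A, B, C, D, E) := by
  have := Equiv.sum_comp e g
  simpa only [Fintype.sum_prod_type] using this

/-- The rotation of order five of the exponents. -/
def rot5 : V × V × V × V × V ≃ V × V × V × V × V where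
  toFun := fun (A, B, C, D, E) => (-(C + D + E), C, A + C + E, -(A + B + C + D + E), D)
  invFun := fun (A, B, C, D, E) => (A + C + E, -(C + D + E), B, E, -(A + B + E))
  left_inv := by
    rintro ⟨A, B, C, D, E⟩
    simp only [Prod.mk.injEq]
    refine ⟨?_, ?_, ?_, ?_, ?_⟩ <;> first | trivial | ring
  right_inv := by
    rintro ⟨A, B, C, D, E⟩
    simp only [Prod.mk.injEq]
    refine ⟨?_, ?_, ?_, ?_, ?_⟩ <;> first | trivial | ring

/-- The involution of the exponents which exchanges the pentagon with the pentagram. -/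
def flip5 : V × V × V × V × V ≃ V × V × V × V × V where
  toFun := fun (A, B, C, D, E) => (A, E, -(A + B + C + D + E), D, B)
  invFun := fun (A, B, C, D, E) => (A, E, -(A + B + C + D + E), D, B)
  left_inv := by
    rintro ⟨A, B, C, D, E⟩
    simp only [Prod.mk.injEq, true_and, and_true]
    ring
  right_inv := by
    rintro ⟨A, B, C, D, E⟩
    simp only [Prod.mk.injEq, true_and, and_true]
    ring

/-- Number of vanishing pentagon forms. -/
def n1 (A B C D E : V) : ℂ :=
  zi E + zi D + zi (A + B + C + D + E) + zi (B + D + E) + zi (A + B + E)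

/-- Number of vanishing pentagram forms. -/
def n2 (A B C D E : V) : ℂ :=
  zi B + zi C + zi (A + C + E) + zi A + zi (C + D + E)

/-- Indicator of the nonvanishing of all pentagon forms. -/
def u1 (A B C D E : V) : ℂ :=
  (1 - zi E) * (1 - zi D) * (1 - zi (A + B + C + D + E)) * (1 - zi (B + D + E)) *
    (1 - zi (A + B + E))

/-- Indicator of the nonvanishing of all pentagram forms. -/
def u2 (A B C D E : V) : ℂ :=
  (1 - zi B) * (1 - zi C) * (1 - zi (A + C + E)) * (1 - zi A) * (1 - zi (C + D + E))

lemma zi_five (a b c d e : V) :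
    (zi a + zi b + zi c + zi d + zi e = 0 ∧
      (1 - zi a) * (1 - zi b) * (1 - zi c) * (1 - zi d) * (1 - zi e) = 1) ∨
    (zi a + zi b + zi c + zi d + zi e ≠ 0 ∧
      (1 - zi a) * (1 - zi b) * (1 - zi c) * (1 - zi d) * (1 - zi e) = 0) := by
  unfold zi
  split_ifs <;> norm_num

/-- The partition of unity: either none of the ten forms vanishes, or the unit mass is shared
equally among the vanishing pentagon forms, or, if there are none of these, among the vanishing
pentagram forms. -/
lemma unity (A B C D E : V) : (1 : ℂ) = u1 A B C D E * u2 A B C D E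
    + n1 A B C D E * (1 / n1 A B C D E) + n2 A B C D E * (u1 A B C D E / n2 A B C D E) := by
  have h1 : (n1 A B C D E = 0 ∧ u1 A B C D E = 1) ∨ (n1 A B C D E ≠ 0 ∧ u1 A B C D E = 0) :=
    zi_five _ _ _ _ _
  have h2 : (n2 A B C D E = 0 ∧ u2 A B C D E = 1) ∨ (n2 A B C D E ≠ 0 ∧ u2 A B C D E = 0) :=
    zi_five _ _ _ _ _
  rcases h1 with ⟨h, e⟩ | ⟨h, e⟩ <;> rcases h2 with ⟨h', e'⟩ | ⟨h', e'⟩ <;>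
    rw [e, e'] <;> simp [h, h']

/-- The symmetries of the five-character sum, and its value at `E = 0`. -/
structure IsFive (s : V → ℂ) (q : ℂ) (J : V → V → ℂ) (f : V → V → V → V → V → ℂ) : Prop where
  rot : ∀ A B C D E, f (-(C + D + E)) C (A + C + E) (-(A + B + C + D + E)) D = f A B C D E
  flip : ∀ A B C D E, f A B C D E = s D * f A E (-(A + B + C + D + E)) D B
  zero : ∀ A B C D, f A B C D 0 = fE s q J A B C D

variable {s : V → ℂ} {q : ℂ} {J : V → V → ℂ} {f : V → V → V → V → V → ℂ}

lemma IsFive.sum_rot (hf : IsFive s q J f) (u : V → V → V → V → V → ℂ) :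
    ∑ A, ∑ B, ∑ C, ∑ D, ∑ E, f A B C D E *
      u (-(C + D + E)) C (A + C + E) (-(A + B + C + D + E)) D =
    ∑ A, ∑ B, ∑ C, ∑ D, ∑ E, f A B C D E * u A B C D E := by
  have := sum5_equiv rot5 (fun x : V × V × V × V × V =>
    f x.1 x.2.1 x.2.2.1 x.2.2.2.1 x.2.2.2.2 * u x.1 x.2.1 x.2.2.1 x.2.2.2.1 x.2.2.2.2)
  simpa only [rot5, Equiv.coe_fn_mk, hf.rot] using this

lemma IsFive.sum_flip (hf : IsFive s q J f) (u : V → V → V → V → V → ℂ) :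
    ∑ A, ∑ B, ∑ C, ∑ D, ∑ E, f A B C D E * u A B C D E =
    ∑ A, ∑ B, ∑ C, ∑ D, ∑ E, f A B C D E *
      (s D * u A E (-(A + B + C + D + E)) D B) := by
  have := sum5_equiv flip5 (fun x : V × V × V × V × V =>
    f x.1 x.2.1 x.2.2.1 x.2.2.2.1 x.2.2.2.2 *
      (s x.2.2.2.1 * u x.1 x.2.2.2.2 (-(x.1 + x.2.1 + x.2.2.1 + x.2.2.2.1 + x.2.2.2.2))
        x.2.2.2.1 x.2.1))
  rw [← this]
  refine sum_congr rfl fun A _ => sum_congr rfl fun B _ => sum_congr rfl fun C _ =>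
    sum_congr rfl fun D _ => sum_congr rfl fun E _ => ?_
  simp only [flip5, Equiv.coe_fn_mk]
  rw [show -(A + E + -(A + B + C + D + E) + D + B) = C by ring, hf.flip A B C D E]
  ring

/-- The rotation permutes the five pentagon forms cyclically up to sign, so for an invariant weight `v`
each of them contributes as much as `E`. -/
lemma IsFive.pentagon (hf : IsFive s q J f) (v : V → V → V → V → V → ℂ)
    (hv : ∀ A B C D E, v (-(C + D + E)) C (A + C + E) (-(A + B + C + D + E)) D = v A B C D E) :
    ∑ A, ∑ B, ∑ C, ∑ D, ∑ E, f A B C D E * (n1 A B C D E * v A B C D E) =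
      5 * ∑ A, ∑ B, ∑ C, ∑ D, ∑ E, f A B C D E * (zi E * v A B C D E) := by
  have h1 := hf.sum_rot (fun A B C D E => zi E * v A B C D E)
  have h2 := hf.sum_rot (fun A B C D E => zi D * v A B C D E)
  have h3 := hf.sum_rot (fun A B C D E => zi (A + B + C + D + E) * v A B C D E)
  have h4 := hf.sum_rot (fun A B C D E => zi (B + D + E) * v A B C D E)
  have e3 (A B C D E : V) : zi (-(C + D + E) + C + (A + C + E) + -(A + B + C + D + E) + D) =
    zi (B + D + E) := by
    rw [← zi_neg]; congr 1; ring
  have e4 (A B C D E : V) : zi (C + -(A + B + C + D + E) + D) = zi (A + B + E) := by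
    rw [← zi_neg]; congr 1; ring
  simp only [hv, zi_neg, e3, e4] at h1 h2 h3 h4
  simp only [n1, add_mul, mul_add, sum_add_distrib]
  linear_combination 4 * h1 + 3 * h2 + 2 * h3 + h4

/-- The rotation permutes the five pentagram forms cyclically up to sign, so for an invariant weight `v`
each of them contributes as much as `B`. -/
lemma IsFive.pentagram (hf : IsFive s q J f) (v : V → V → V → V → V → ℂ)
    (hv : ∀ A B C D E, v (-(C + D + E)) C (A + C + E) (-(A + B + C + D + E)) D = v A B C D E) :
    ∑ A, ∑ B, ∑ C, ∑ D, ∑ E, f A B C D E * (n2 A B C D E * v A B C D E) =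
      5 * ∑ A, ∑ B, ∑ C, ∑ D, ∑ E, f A B C D E * (zi B * v A B C D E) := by
  have h1 := hf.sum_rot (fun A B C D E => zi B * v A B C D E)
  have h2 := hf.sum_rot (fun A B C D E => zi C * v A B C D E)
  have h3 := hf.sum_rot (fun A B C D E => zi (A + C + E) * v A B C D E)
  have h4 := hf.sum_rot (fun A B C D E => zi A * v A B C D E)
  have e3 (A C D E : V) : zi (-(C + D + E) + (A + C + E) + D) = zi A := by
    congr 1; ring
  simp only [hv, zi_neg, e3] at h1 h2 h3 h4
  simp only [n2, add_mul, mul_add, sum_add_distrib]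
  linear_combination 4 * h1 + 3 * h2 + 2 * h3 + h4

lemma n1_rot (A B C D E : V) :
    n1 (-(C + D + E)) C (A + C + E) (-(A + B + C + D + E)) D = n1 A B C D E := by
  unfold n1
  rw [show -(C + D + E) + C + (A + C + E) + -(A + B + C + D + E) + D = -(B + D + E) by ring,
    show C + -(A + B + C + D + E) + D = -(A + B + E) by ring,
    show -(C + D + E) + C + D = -E by ring]
  simp only [zi_neg]
  ring

lemma u1_rot (A B C D E : V) :
    u1 (-(C + D + E)) C (A + C + E) (-(A + B + C + D + E)) D = u1 A B C D E := by
  unfold u1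
  rw [show -(C + D + E) + C + (A + C + E) + -(A + B + C + D + E) + D = -(B + D + E) by ring,
    show C + -(A + B + C + D + E) + D = -(A + B + E) by ring,
    show -(C + D + E) + C + D = -E by ring]
  simp only [zi_neg]
  ring

lemma n2_rot (A B C D E : V) :
    n2 (-(C + D + E)) C (A + C + E) (-(A + B + C + D + E)) D = n2 A B C D E := by
  unfold n2
  rw [show -(C + D + E) + (A + C + E) + D = A by ring,
    show A + C + E + -(A + B + C + D + E) + D = -B by ring]
  simp only [zi_neg]
  ring

lemma sum_zi_last (g : V → V → V → V → V → ℂ) :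
    ∑ A, ∑ B, ∑ C, ∑ D, ∑ E, zi E * g A B C D E = ∑ A, ∑ B, ∑ C, ∑ D, g A B C D 0 := by
  simp only [sum_zi_mul]

/-- The part of the total five-character sum on which some form vanishes is five times the weight
of one pentagon edge plus five times the weight of one pentagram edge. -/
lemma IsFive.total (hf : IsFive s q J f) :
    ∑ A, ∑ B, ∑ C, ∑ D, ∑ E, f A B C D E =
      (∑ A, ∑ B, ∑ C, ∑ D, ∑ E, f A B C D E * (u1 A B C D E * u2 A B C D E))
      + 5 * ((∑ A, ∑ B, ∑ C, ∑ D, fE s q J A B C D * wE A B C D)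
        + (∑ A, ∑ B, ∑ C, ∑ D, fE s q J A B C D * (s D * wB A B C D))) := by
  have h0 : ∑ A, ∑ B, ∑ C, ∑ D, ∑ E, f A B C D E =
      (∑ A, ∑ B, ∑ C, ∑ D, ∑ E, f A B C D E * (u1 A B C D E * u2 A B C D E))
      + (∑ A, ∑ B, ∑ C, ∑ D, ∑ E, f A B C D E * (n1 A B C D E * (1 / n1 A B C D E)))
      + (∑ A, ∑ B, ∑ C, ∑ D, ∑ E, f A B C D E *
        (n2 A B C D E * (u1 A B C D E / n2 A B C D E))) := by
    simp only [← sum_add_distrib]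
    refine sum_congr rfl fun A _ => sum_congr rfl fun B _ => sum_congr rfl fun C _ =>
      sum_congr rfl fun D _ => sum_congr rfl fun E _ => ?_
    rw [← mul_add, ← mul_add, ← unity, mul_one]
  rw [h0, hf.pentagon (fun A B C D E => 1 / n1 A B C D E) (fun A B C D E => by rw [n1_rot]),
    hf.pentagram (fun A B C D E => u1 A B C D E / n2 A B C D E)
      (fun A B C D E => by rw [n2_rot, u1_rot]),
    hf.sum_flip (fun A B C D E => zi B * (u1 A B C D E / n2 A B C D E))]
  have c1 (A B C D E : V) : f A B C D E * (zi E * (1 / n1 A B C D E)) =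
    zi E * (f A B C D E * (1 / n1 A B C D E)) := by ring
  have c2 (A B C D E : V) (w : ℂ) : f A B C D E * (s D * (zi E * w)) =
    zi E * (f A B C D E * (s D * w)) := by ring
  simp only [c1, c2, sum_zi_last, hf.zero]
  have g1 (A B C D : V) : 1 / n1 A B C D 0 = wE A B C D := by
    unfold n1 wE
    simp only [add_zero, zi_zero]
    congr 1; ring
  have g2 (A B C D : V) : u1 A 0 (-(A + B + C + D + 0)) D B /
      n2 A 0 (-(A + B + C + D + 0)) D B = wB A B C D := by
    unfold u1 n2 wB
    rw [show A + 0 + -(A + B + C + D + 0) + D + B = -C by ring,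
      show A + -(A + B + C + D + 0) + B = -(C + D) by ring,
      show -(A + B + C + D + 0) + D + B = -(A + C) by ring]
    simp only [add_zero, zero_add, zi_neg, zi_zero]
    congr 1
    · rw [add_comm D B]; ring
    · ring
  simp only [g1, g2]
  ring

end FiveSum

/-! ### The five-character sums -/

section FiveChars

variable {F : Type} [Field F] [Fintype F] [DecidableEq F] {k : ℕ} [NeZero k] {χ : MulChar F ℂ}

/-- The summand of the five-character sum at the point `p`. -/
noncomputable def term (χ : MulChar F ℂ) (A B C D E : ZMod k) (p : F × F) : ℂ :=
  Psi χ A p.1 * Psi χ B (p.1 - 1) * Psi χ C p.2 * Psi χ D (p.2 - 1) * Psi χ E (p.1 - p.2)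

/-- The five-character sum `∑_{a,b} ψ_A(a) ψ_B(a - 1) ψ_C(b) ψ_D(b - 1) ψ_E(a - b)`. -/
noncomputable def five (χ : MulChar F ℂ) (A B C D E : ZMod k) : ℂ :=
  ∑ a : F, ∑ b : F, term χ A B C D E (a, b)

/-- The points at which all five arguments of the characters are nonzero. -/
def pts : Finset (F × F) :=
  univ.filter fun p => p.1 ≠ 0 ∧ p.1 - 1 ≠ 0 ∧ p.2 ≠ 0 ∧ p.2 - 1 ≠ 0 ∧ p.1 - p.2 ≠ 0

lemma five_eq (A B C D E : ZMod k) : five χ A B C D E = ∑ p ∈ pts, term χ A B C D E p := by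
  rw [five, ← Fintype.sum_prod_type' (fun a b => term χ A B C D E (a, b))]
  symm
  refine sum_subset (subset_univ _) fun p _ hp => ?_
  simp only [pts, mem_filter, mem_univ, true_and] at hp
  by_contra hne
  apply hp
  refine ⟨?_, ?_, ?_, ?_, ?_⟩ <;> intro h0 <;> apply hne <;>
    simp only [term, h0, MulChar.map_zero, mul_zero, zero_mul]

/-- Invariance under the automorphism `(a, b) ↦ (b / (b - 1), b (a - 1) / ((b - 1) a))` of order five of
the space of points. -/
lemma Good.five_rot (h : Good k χ) (A B C D E : ZMod k) :
    five χ (-(C + D + E)) C (A + C + E) (-(A + B + C + D + E)) D = five χ A B C D E := by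
  rw [five_eq, five_eq]
  refine sum_nbij' (fun p => (p.2 * (p.2 - 1)⁻¹, p.2 * (p.1 - 1) * (p.2 - 1)⁻¹ * p.1⁻¹))
    (fun p => (p.1 * (p.1 - p.2)⁻¹, p.1 * (p.1 - 1)⁻¹)) ?_ ?_ ?_ ?_ ?_
  all_goals
    rintro ⟨a, b⟩ hp
    simp only [pts, mem_filter, mem_univ, true_and] at hp ⊢
    obtain ⟨h1, h2, h3, h4, h5⟩ := hp
  · have e1 : b * (b - 1)⁻¹ - 1 = (b - 1)⁻¹ := by field_simp; ring
    have e2 : b * (a - 1) * (b - 1)⁻¹ * a⁻¹ - 1 = (a - b) * (b - 1)⁻¹ * a⁻¹ := by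
      field_simp; ring
    have e3 : b * (b - 1)⁻¹ - b * (a - 1) * (b - 1)⁻¹ * a⁻¹ = b * (b - 1)⁻¹ * a⁻¹ := by
      field_simp; ring
    rw [e1, e2, e3]
    simp [h1, h2, h3, h4, h5]
  · have e1 : a * (a - b)⁻¹ - 1 = b * (a - b)⁻¹ := by field_simp; ring
    have e2 : a * (a - 1)⁻¹ - 1 = (a - 1)⁻¹ := by field_simp; ring
    have e3 : a * (a - b)⁻¹ - a * (a - 1)⁻¹ = a * (b - 1) * (a - b)⁻¹ * (a - 1)⁻¹ := by
      field_simp; ring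
    rw [e1, e2, e3]
    simp [h1, h2, h3, h4, h5]
  · have e1 : b * (b - 1)⁻¹ - 1 = (b - 1)⁻¹ := by field_simp; ring
    have e3 : b * (b - 1)⁻¹ - b * (a - 1) * (b - 1)⁻¹ * a⁻¹ = b * (b - 1)⁻¹ * a⁻¹ := by
      field_simp; ring
    rw [e1, e3]
    refine Prod.ext ?_ ?_ <;> simp only [] <;> field_simp
  · have e1 : a * (a - b)⁻¹ - 1 = b * (a - b)⁻¹ := by field_simp; ring
    have e2 : a * (a - 1)⁻¹ - 1 = (a - 1)⁻¹ := by field_simp; ring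
    rw [e1, e2]
    refine Prod.ext ?_ ?_ <;> simp only [] <;> field_simp
  · have e1 : b * (b - 1)⁻¹ - 1 = (b - 1)⁻¹ := by field_simp; ring
    have e2 : b * (a - 1) * (b - 1)⁻¹ * a⁻¹ - 1 = (a - b) * (b - 1)⁻¹ * a⁻¹ := by
      field_simp; ring
    have e3 : b * (b - 1)⁻¹ - b * (a - 1) * (b - 1)⁻¹ * a⁻¹ = b * (b - 1)⁻¹ * a⁻¹ := by
      field_simp; ring
    simp only [term]
    rw [e1, e2, e3]
    simp only [h.neg_apply, h.add_apply, map_mul]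
    ring

/-- The substitution `(a, b) ↦ (a / b, 1 / b)`; the sign comes from `1 / b - 1 = -(b - 1) / b`. -/
lemma Good.five_flip (h : Good k χ) (A B C D E : ZMod k) :
    five χ A B C D E = sg χ D * five χ A E (-(A + B + C + D + E)) D B := by
  rw [five_eq, five_eq, mul_sum]
  symm
  refine sum_nbij' (fun p => (p.1 * p.2⁻¹, p.2⁻¹)) (fun p => (p.1 * p.2⁻¹, p.2⁻¹)) ?_ ?_ ?_ ?_ ?_
  all_goals
    rintro ⟨a, b⟩ hp
    simp only [pts, mem_filter, mem_univ, true_and] at hp ⊢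
    obtain ⟨h1, h2, h3, h4, h5⟩ := hp
  iterate 2
    · have e1 : a * b⁻¹ - 1 = (a - b) * b⁻¹ := by field_simp
      have e2 : b⁻¹ - 1 = -(b - 1) * b⁻¹ := by field_simp; ring
      have e3 : a * b⁻¹ - b⁻¹ = (a - 1) * b⁻¹ := by ring
      rw [e1, e2, e3]
      refine ⟨?_, ?_, ?_, ?_, ?_⟩ <;>
        simp only [ne_eq, mul_eq_zero, inv_eq_zero, neg_eq_zero, h1, h2, h3, h4, h5, or_self,
          not_false_eq_true]
  iterate 2
    · refine Prod.ext ?_ ?_ <;> simp only [inv_inv]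
      field_simp
  · have e1 : a * b⁻¹ - 1 = (a - b) * b⁻¹ := by field_simp
    have e2 : b⁻¹ - 1 = -(b - 1) * b⁻¹ := by field_simp; ring
    have e3 : a * b⁻¹ - b⁻¹ = (a - 1) * b⁻¹ := by ring
    simp only [term]
    rw [e1, e2, e3]
    simp only [h.neg_apply, h.add_apply, map_mul, psi_neg_arg]
    ring

/-- At `E = 0` the last character only excludes the diagonal `a = b`, which is subtracted. -/
lemma Good.five_zero (h : Good k χ) (A B C D : ZMod k) :
    five χ A B C D 0 = fE (sg χ) (Fintype.card F) (Jc χ) A B C D := by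
  rw [fE, ← h.JF_eq, ← h.JF_eq, ← h.JF_eq]
  have h0 (a b : F) : Psi χ (0 : ZMod k) (a - b) = 1 - (if a = b then 1 else 0) := by
    rw [Psi_zero]
    by_cases hab : a = b
    · simp [hab, MulChar.map_zero]
    · rw [MulChar.one_apply (sub_ne_zero.2 hab).isUnit]; simp [hab]
  simp only [five, term, h0, mul_sub, mul_one, sum_sub_distrib, mul_ite, mul_zero, sum_ite_eq,
    mem_univ, if_true]
  congr 1
  · simp only [JF, sum_mul_sum]
    refine sum_congr rfl fun a _ => sum_congr rfl fun b _ => by ring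
  · simp only [JF]
    refine sum_congr rfl fun a _ => ?_
    rw [h.add_apply, h.add_apply]; ring

lemma Good.isFive (h : Good k χ) :
    IsFive (sg χ) (Fintype.card F) (Jc χ) (five χ : ZMod k → _) :=
  ⟨h.five_rot, h.five_flip, h.five_zero⟩

end FiveChars

/-! ### Counting transitive subtournaments -/

section Count

/-- In an asymmetric digraph a transitive subtournament determines its ordering, so transitive
subtournaments may be counted as tuples. -/
lemma transK_eq {V : Type} [DecidableEq V] {edge : V → V → Prop}
    (has : ∀ x y, edge x y → ¬ edge y x) (m : ℕ) :
    transK edge m = {f : Fin m → V | ∀ i j, i < j → edge (f i) (f j)}.ncard := by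
  have hinj : ∀ f : Fin m → V, (∀ i j, i < j → edge (f i) (f j)) → Function.Injective f := by
    intro f hf i j hij
    by_contra hne
    rcases lt_or_gt_of_ne hne with hlt | hlt
    · have := hf i j hlt
      rw [hij] at this
      exact has _ _ this this
    · have := hf j i hlt
      rw [hij] at this
      exact has _ _ this this
  have hset : {s : Finset V | ∃ f : Fin m → V, Function.Injective f ∧ s = image f univ ∧
      ∀ i j : Fin m, i < j → edge (f i) (f j)} =
      (fun f : Fin m → V => image f univ) '' {f : Fin m → V | ∀ i j, i < j → edge (f i) (f j)} := by
    ext s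
    constructor
    · rintro ⟨f, _, rfl, hf⟩
      exact ⟨f, hf, rfl⟩
    · rintro ⟨f, hf, rfl⟩
      exact ⟨f, hinj f hf, rfl, hf⟩
  rw [transK, hset]
  refine Set.InjOn.ncard_image ?_
  intro f hf g hg hfg
  have hsub : ∀ i, ∃ j, f j = g i := by
    intro i
    have : g i ∈ image f univ := by
      have hfg' : image f univ = image g univ := hfg
      rw [hfg']; exact mem_image_of_mem _ (mem_univ i)
    obtain ⟨j, _, hj⟩ := mem_image.1 this
    exact ⟨j, hj⟩
  choose σ hσ using hsub
  have hσm : StrictMono σ := by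
    intro i j hij
    have hg' := hg i j hij
    rw [← hσ i, ← hσ j] at hg'
    rcases lt_trichotomy (σ i) (σ j) with hlt | heq | hgt
    · exact hlt
    · rw [heq] at hg'
      exact (has _ _ hg' hg').elim
    · exact (has _ _ hg' (hf _ _ hgt)).elim
  have hid : σ = id := (StrictMono.range_inj hσm strictMono_id).1 (by
    rw [Set.range_id, (Finite.injective_iff_surjective.1 hσm.injective).range_eq])
  funext i
  rw [← hσ i, hid]; rfl

variable {F : Type} [Field F] [Fintype F] [DecidableEq F] {k : ℕ}

/-- Nonzero `k`-th powers. -/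
def IsPow (k : ℕ) (x : F) : Prop := ∃ c : F, c ≠ 0 ∧ x = c ^ k

lemma IsPow.ne_zero {x : F} (h : IsPow k x) : x ≠ 0 := by
  obtain ⟨c, hc, rfl⟩ := h
  exact pow_ne_zero _ hc

lemma IsPow.mul_iff {y z : F} (hy : IsPow k y) : IsPow k (y * z) ↔ IsPow k z := by
  obtain ⟨c, hc, rfl⟩ := hy
  constructor
  · rintro ⟨d, hd, e⟩
    exact ⟨d / c, div_ne_zero hd hc, by
      rw [div_pow, ← e, mul_div_cancel_left₀ _ (pow_ne_zero _ hc)]⟩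
  · rintro ⟨d, hd, rfl⟩
    exact ⟨c * d, mul_ne_zero hc hd, by rw [mul_pow]⟩

open Classical in
/-- The indicator of the nonzero `k`-th powers. -/
noncomputable def pw (k : ℕ) (x : F) : ℂ := if IsPow k x then 1 else 0

/-- Normalising the first two vertices to `0` and `1` by an affine map, a transitive subtournament of
order four with vertices `x, x + y, x + y b, x + y a` amounts to a free `x`, a `k`-th power `y`
and a pair `a, b` for which `a, a - 1, b, b - 1, a - b` are `k`-th powers. -/
lemma transK_four (hneg : ∀ c : F, c ≠ 0 → (-1 : F) ≠ c ^ k) :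
    (transK (fun a b : F => ∃ c : F, c ≠ 0 ∧ b - a = c ^ k) 4 : ℂ) =
      Fintype.card F * (∑ y : F, pw k y) *
        ∑ a : F, ∑ b : F, pw k a * pw k (a - 1) * pw k b * pw k (b - 1) * pw k (a - b) := by
  classical
  have has : ∀ x y : F, IsPow k (y - x) → ¬ IsPow k (x - y) := by
    intro x y h1 h2
    rw [show x - y = (y - x) * (-1) by ring, h1.mul_iff] at h2
    obtain ⟨c, hc, e⟩ := h2
    exact hneg c hc e
  rw [transK_eq (edge := fun a b : F => ∃ c : F, c ≠ 0 ∧ b - a = c ^ k) has]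
  set S : Finset (F × F × F × F) := univ.filter fun p =>
    IsPow k p.2.1 ∧ IsPow k p.2.2.1 ∧ IsPow k (p.2.2.1 - 1) ∧ IsPow k p.2.2.2 ∧
      IsPow k (p.2.2.2 - 1) ∧ IsPow k (p.2.2.1 - p.2.2.2) with hS
  have himg : {f : Fin 4 → F | ∀ i j, i < j → ∃ c : F, c ≠ 0 ∧ f j - f i = c ^ k} =
      (fun p : F × F × F × F => ![p.1, p.1 + p.2.1, p.1 + p.2.1 * p.2.2.2, p.1 + p.2.1 * p.2.2.1])
        '' (S : Set (F × F × F × F)) := by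
    ext f
    constructor
    · intro hf
      have h01 : IsPow k (f 1 - f 0) := hf 0 1 (by decide)
      have h02 : IsPow k (f 2 - f 0) := hf 0 2 (by decide)
      have h03 : IsPow k (f 3 - f 0) := hf 0 3 (by decide)
      have h12 : IsPow k (f 2 - f 1) := hf 1 2 (by decide)
      have h13 : IsPow k (f 3 - f 1) := hf 1 3 (by decide)
      have h23 : IsPow k (f 3 - f 2) := hf 2 3 (by decide)
      have hne := h01.ne_zero
      refine ⟨(f 0, f 1 - f 0, (f 3 - f 0) / (f 1 - f 0), (f 2 - f 0) / (f 1 - f 0)), ?_, ?_⟩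
      · simp only [hS, coe_filter, mem_univ, true_and, Set.mem_ofPred_eq]
        refine ⟨h01, ?_, ?_, ?_, ?_, ?_⟩ <;> rw [← h01.mul_iff]
        · rwa [mul_div_cancel₀ _ hne]
        · rwa [mul_sub, mul_div_cancel₀ _ hne, mul_one, sub_sub_sub_cancel_right]
        · rwa [mul_div_cancel₀ _ hne]
        · rwa [mul_sub, mul_div_cancel₀ _ hne, mul_one, sub_sub_sub_cancel_right]
        · rwa [mul_sub, mul_div_cancel₀ _ hne, mul_div_cancel₀ _ hne, sub_sub_sub_cancel_right]
      · funext i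
        fin_cases i
        · rfl
        · simp
        · simp [mul_div_cancel₀ _ hne]
        · simp [mul_div_cancel₀ _ hne]
    · rintro ⟨⟨x, y, a, b⟩, hp, rfl⟩
      simp only [hS, coe_filter, mem_univ, true_and, Set.mem_ofPred_eq] at hp
      obtain ⟨hy, ha, ha1, hb, hb1, hab⟩ := hp
      have g1 : IsPow k (x + y - x) := by rwa [add_sub_cancel_left]
      have g2 : IsPow k (x + y * b - x) := by rwa [add_sub_cancel_left, hy.mul_iff]
      have g3 : IsPow k (x + y * a - x) := by rwa [add_sub_cancel_left, hy.mul_iff]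
      have g4 : IsPow k (x + y * b - (x + y)) := by
        rwa [show x + y * b - (x + y) = y * (b - 1) by ring, hy.mul_iff]
      have g5 : IsPow k (x + y * a - (x + y)) := by
        rwa [show x + y * a - (x + y) = y * (a - 1) by ring, hy.mul_iff]
      have g6 : IsPow k (x + y * a - (x + y * b)) := by
        rwa [show x + y * a - (x + y * b) = y * (a - b) by ring, hy.mul_iff]
      intro i j hij
      fin_cases i <;> fin_cases j <;> first
        | exact g1 | exact g2 | exact g3 | exact g4 | exact g5 | exact g6
        | exact absurd hij (by decide)
  have hinj : Set.InjOn (fun p : F × F × F × F =>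
      ![p.1, p.1 + p.2.1, p.1 + p.2.1 * p.2.2.2, p.1 + p.2.1 * p.2.2.1])
      (S : Set (F × F × F × F)) := by
    rintro ⟨x, y, a, b⟩ hp ⟨x', y', a', b'⟩ _ he
    simp only [hS, coe_filter, mem_univ, true_and, Set.mem_ofPred_eq] at hp
    have e0 : x = x' := congrFun he 0
    have e1 : x + y = x' + y' := congrFun he 1
    have e2 : x + y * b = x' + y' * b' := congrFun he 2
    have e3 : x + y * a = x' + y' * a' := congrFun he 3
    subst e0
    obtain rfl : y = y' := add_left_cancel e1
    have hy := hp.1.ne_zero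
    obtain rfl : b = b' := mul_left_cancel₀ hy (add_left_cancel e2)
    obtain rfl : a = a' := mul_left_cancel₀ hy (add_left_cancel e3)
    rfl
  rw [himg, hinj.ncard_image, Set.ncard_coe_finset, hS, card_filter, Nat.cast_sum]
  simp only [Fintype.sum_prod_type]
  have e (y a b : F) : (((if IsPow k y ∧ IsPow k a ∧ IsPow k (a - 1) ∧ IsPow k b ∧
      IsPow k (b - 1) ∧ IsPow k (a - b) then 1 else 0 : ℕ)) : ℂ) =
      pw k y * (pw k a * pw k (a - 1) * pw k b * pw k (b - 1) * pw k (a - b)) := by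
    unfold pw
    by_cases h1 : IsPow k y <;> by_cases h2 : IsPow k a <;> by_cases h3 : IsPow k (a - 1) <;>
      by_cases h4 : IsPow k b <;> by_cases h5 : IsPow k (b - 1) <;>
      by_cases h6 : IsPow k (a - b) <;> simp [h1, h2, h3, h4, h5, h6]
  simp only [e, ← mul_sum, ← sum_mul, sum_const, card_univ, nsmul_eq_mul]
  ring

end Count

/-! ### From the count to the five-character sums -/

section Assemble

variable {F : Type} [Field F] [Fintype F] [DecidableEq F] {k : ℕ} [NeZero k] {χ : MulChar F ℂ}

/-- Orthogonality over the powers of `χ` detects nonzero `k`-th powers. -/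
lemma Good.sum_psi (h : Good k χ) (x : F) : ∑ t : ZMod k, Psi χ t x = k * pw k x := by
  by_cases hx : x = 0
  · subst hx
    have : ¬ IsPow k (0 : F) := fun hp => hp.ne_zero rfl
    simp [pw, this, MulChar.map_zero]
  by_cases hp : IsPow k x
  · have h1 : χ x = 1 := (char_eq_one_iff h.ord hx).2 hp
    have (t : ZMod k) : Psi χ t x = 1 := by
      have := MulChar.pow_apply_coe χ t.val (Units.mk0 x hx)
      rw [Psi]
      simpa [h1] using this
    simp [this, pw, hp, ZMod.card]
  · have h1 : χ x ≠ 1 := fun e => hp ((char_eq_one_iff h.ord hx).1 e)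
    have hone : Psi χ (1 : ZMod k) = χ := by simpa using h.natCast 1
    have : (∑ t : ZMod k, Psi χ t x) = (∑ t : ZMod k, Psi χ t x) * χ x := by
      conv_lhs => rw [← Equiv.sum_comp (Equiv.addRight (1 : ZMod k))]
      simp only [Equiv.coe_addRight, h.add_apply, hone, sum_mul]
    rw [pw, if_neg hp, mul_zero]
    have h2 : (∑ t : ZMod k, Psi χ t x) * (χ x - 1) = 0 := by linear_combination -this
    exact (mul_eq_zero.1 h2).resolve_right (sub_ne_zero.2 h1)

lemma Good.sum_pw (h : Good k χ) : (k : ℂ) * ∑ y : F, pw k y = Fintype.card F - 1 := by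
  rw [mul_sum]
  simp only [← h.sum_psi]
  rw [sum_comm, ← sum_erase_add _ _ (mem_univ (0 : ZMod k)), sum_eq_zero, zero_add, Psi_zero,
    MulChar.sum_one_eq_card_units, Fintype.card_units, Nat.cast_sub Fintype.card_pos, Nat.cast_one]
  intro t ht
  exact MulChar.sum_eq_zero_of_ne_one (mt h.eq_one.1 (ne_of_mem_erase ht))

lemma sum_comm_VF (g : ZMod k → F → ℂ) : ∑ t, ∑ x, g t x = ∑ x, ∑ t, g t x := sum_comm

lemma Good.sum_five (h : Good k χ) :
    ∑ A : ZMod k, ∑ B : ZMod k, ∑ C : ZMod k, ∑ D : ZMod k, ∑ E : ZMod k, five χ A B C D E =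
      (k : ℂ) ^ 5 * ∑ a : F, ∑ b : F,
        pw k a * pw k (a - 1) * pw k b * pw k (b - 1) * pw k (a - b) := by
  simp only [five, sum_comm_VF, mul_sum]
  refine sum_congr rfl fun a _ => sum_congr rfl fun b _ => ?_
  simp only [term, ← mul_sum, ← sum_mul, h.sum_psi]
  ring

/-- The number of transitive subtournaments of order four as a total of five-character sums. -/
lemma Good.count (h : Good k χ) (hneg : ∀ c : F, c ≠ 0 → (-1 : F) ≠ c ^ k) :
    (k : ℂ) ^ 6 * (transK (fun a b : F => ∃ c : F, c ≠ 0 ∧ b - a = c ^ k) 4 : ℂ) =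
      Fintype.card F * (Fintype.card F - 1) * 
      ∑ A : ZMod k, ∑ B : ZMod k, ∑ C : ZMod k, ∑ D : ZMod k, ∑ E : ZMod k, five χ A B C D E := by
  rw [transK_four hneg, h.sum_five, ← h.sum_pw]
  ring

/-- The change of exponents between the two parametrisations of the five-character sums. -/
def reparam : ZMod k × ZMod k × ZMod k × ZMod k × ZMod k ≃
    ZMod k × ZMod k × ZMod k × ZMod k × ZMod k where
  toFun := fun (t1, t2, t3, t4, t5) => (t1 - t5, t5 - t3, t2, t4 - t2, -t1)
  invFun := fun (A, B, C, D, E) => (-E, C, -(A + B + E), C + D, -(A + E))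
  left_inv := by
    rintro ⟨t1, t2, t3, t4, t5⟩
    simp only [Prod.mk.injEq]
    refine ⟨?_, ?_, ?_, ?_, ?_⟩ <;> first | trivial | ring
  right_inv := by
    rintro ⟨A, B, C, D, E⟩
    simp only [Prod.mk.injEq]
    refine ⟨?_, ?_, ?_, ?_, ?_⟩ <;> first | trivial | ring

/-- The exponents in `X_k` are those for which none of the ten forms vanishes. -/
lemma ite_X (t1 t2 t3 t4 t5 : ZMod k) (z : ℂ) :
    (if t1 ≠ 0 ∧ t2 ≠ 0 ∧ t3 ≠ 0 ∧ t1 ≠ t4 ∧ t1 ≠ t5 ∧ t2 ≠ t4 ∧ t2 ≠ t5 ∧ t3 ≠ t4 ∧ t3 ≠ t5 ∧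
      t1 + t2 + t3 ≠ t4 + t5 then z else 0) =
    z * (u1 (t1 - t5) (t5 - t3) t2 (t4 - t2) (-t1) * u2 (t1 - t5) (t5 - t3) t2 (t4 - t2) (-t1)) := by
  have st (x : ZMod k) (p : Prop) [Decidable p] : (if x ≠ 0 ∧ p then z else 0) =
      (1 - zi x) * (if p then z else 0) := by
    by_cases hx : x = 0 <;> simp [hx, zi]
  have st' (x y : ZMod k) (p : Prop) [Decidable p] : (if x ≠ y ∧ p then z else 0) =
      (1 - zi (x - y)) * (if p then z else 0) := by
    by_cases hx : x = y <;> simp [hx, zi, sub_eq_zero]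
  have st1 (x y : ZMod k) : (if x ≠ y then z else 0) = (1 - zi (x - y)) * z := by
    by_cases hx : x = y <;> simp [hx, zi, sub_eq_zero]
  rw [st, st, st, st', st', st', st', st', st', st1]
  unfold u1 u2
  rw [show t1 - t5 + (t5 - t3) + t2 + (t4 - t2) + -t1 = -(t3 - t4) by ring,
    show t5 - t3 + (t4 - t2) + -t1 = -(t1 + t2 + t3 - (t4 + t5)) by ring,
    show t1 - t5 + (t5 - t3) + -t1 = -t3 by ring,
    show t1 - t5 + t2 + -t1 = t2 - t5 by ring,
    show t2 + (t4 - t2) + -t1 = -(t1 - t4) by ring,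
    show t5 - t3 = -(t3 - t5) by ring, show t4 - t2 = -(t2 - t4) by ring]
  simp only [zi_neg]
  ring

/-- The sum over `X_k` in terms of the five-character sums. -/
lemma Good.sum_X (h : Good k χ) :
    (∑ t1 ∈ range k, ∑ t2 ∈ range k, ∑ t3 ∈ range k, ∑ t4 ∈ range k, ∑ t5 ∈ range k,
      if (t1 : ZMod k) ≠ 0 ∧ (t2 : ZMod k) ≠ 0 ∧ (t3 : ZMod k) ≠ 0 ∧
          (t1 : ZMod k) ≠ (t4 : ZMod k) ∧ (t1 : ZMod k) ≠ (t5 : ZMod k) ∧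
          (t2 : ZMod k) ≠ (t4 : ZMod k) ∧ (t2 : ZMod k) ≠ (t5 : ZMod k) ∧
          (t3 : ZMod k) ≠ (t4 : ZMod k) ∧ (t3 : ZMod k) ≠ (t5 : ZMod k) ∧
          (t1 : ZMod k) + t2 + t3 ≠ (t4 : ZMod k) + t5 then
        (-1 : ℂ) ^ (t3 + t5) * ∑ a : F, ∑ b : F,
          (χ ^ ((t1 : ℤ) - t5)) a * (χ ^ ((t5 : ℤ) - t3)) (1 - a) *
            (χ ^ (t2 : ℤ)) b * (χ ^ ((t4 : ℤ) - t2)) (b - 1) * (χ ^ (-(t1 : ℤ))) (a - b)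
      else 0) =
    ∑ A : ZMod k, ∑ B : ZMod k, ∑ C : ZMod k, ∑ D : ZMod k, ∑ E : ZMod k,
      five χ A B C D E * (u1 A B C D E * u2 A B C D E) := by
  have hs : IsSign (sg χ : ZMod k → ℂ) := h.isSign
  have key (t1 t2 t3 t4 t5 : ℕ) : (-1 : ℂ) ^ (t3 + t5) * ∑ a : F, ∑ b : F,
      (χ ^ ((t1 : ℤ) - t5)) a * (χ ^ ((t5 : ℤ) - t3)) (1 - a) *
        (χ ^ (t2 : ℤ)) b * (χ ^ ((t4 : ℤ) - t2)) (b - 1) * (χ ^ (-(t1 : ℤ))) (a - b) =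
      five χ ((t1 : ZMod k) - (t5 : ZMod k)) ((t5 : ZMod k) - (t3 : ZMod k)) (t2 : ZMod k)
        ((t4 : ZMod k) - (t2 : ZMod k)) (-(t1 : ZMod k)) := by
    simp only [five, mul_sum, term]
    refine sum_congr rfl fun a _ => sum_congr rfl fun b _ => ?_
    have hsg : (-1 : ℂ) ^ (t3 + t5) = sg χ ((t5 : ZMod k) - (t3 : ZMod k)) := by
      rw [hs.sub, h.sg_natCast, h.sg_natCast, pow_add, mul_comm]
    rw [hsg, ← h.intCast, ← h.intCast, ← h.intCast, ← h.intCast, ← h.intCast]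
    push_cast
    rw [← neg_sub a 1, psi_neg_arg]
    linear_combination (Psi χ ((t1 : ZMod k) - (t5 : ZMod k)) a * Psi χ ((t5 : ZMod k) - (t3 : ZMod k)) (a - 1) *
      Psi χ (t2 : ZMod k) b * Psi χ ((t4 : ZMod k) - (t2 : ZMod k)) (b - 1) *
      Psi χ (-(t1 : ZMod k)) (a - b)) * hs.sq ((t5 : ZMod k) - (t3 : ZMod k))
  simp only [key, ite_X]
  let g (t1 t2 t3 t4 t5 : ZMod k) : ℂ :=
    five χ (t1 - t5) (t5 - t3) t2 (t4 - t2) (-t1) *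
      (u1 (t1 - t5) (t5 - t3) t2 (t4 - t2) (-t1) * u2 (t1 - t5) (t5 - t3) t2 (t4 - t2) (-t1))
  have conv : (∑ t1 ∈ range k, ∑ t2 ∈ range k, ∑ t3 ∈ range k, ∑ t4 ∈ range k, ∑ t5 ∈ range k,
      g t1 t2 t3 t4 t5) = ∑ t1, ∑ t2, ∑ t3, ∑ t4, ∑ t5, g t1 t2 t3 t4 t5 := by
    simp only [← sum_range_zmod]
  refine conv.trans ?_
  exact sum5_equiv reparam (fun x : ZMod k × ZMod k × ZMod k × ZMod k × ZMod k =>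
    five χ x.1 x.2.1 x.2.2.1 x.2.2.2.1 x.2.2.2.2 *
      (u1 x.1 x.2.1 x.2.2.1 x.2.2.2.1 x.2.2.2.2 * u2 x.1 x.2.1 x.2.2.1 x.2.2.2.1 x.2.2.2.2))

end Assemble

end Paley

theorem stmt_1 {F : Type} [Field F] [Fintype F] [DecidableEq F] (q k : ℕ)
    (hk : 2 ≤ k) (hkeven : Even k) (hq : Fintype.card F = q)
    (hmod : q % (2 * k) = k + 1)
    (χ : MulChar F ℂ) (hχ : orderOf χ = k) :
    (k : ℂ) ^ 6 * (transK (fun a b : F => ∃ c : F, c ≠ 0 ∧ b - a = c ^ k) 4 : ℕ) =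
      (q : ℂ) * ((q : ℂ) - 1) *
        (10 * Rk k χ ^ 2 + 5 * ((q : ℂ) - (k : ℂ) ^ 2 + 1) * Rk k χ
          - 10 * Sk k χ - 5 * Smk k χ
          + (q : ℂ) ^ 2 - 10 * ((k : ℂ) - 1) ^ 2 * (q : ℂ)
          + 5 * (k : ℂ) ^ 2 * ((k : ℂ) - 1) + 1
          + ∑ t1 ∈ Finset.range k, ∑ t2 ∈ Finset.range k, ∑ t3 ∈ Finset.range k,
              ∑ t4 ∈ Finset.range k, ∑ t5 ∈ Finset.range k,
              if (t1 : ZMod k) ≠ 0 ∧ (t2 : ZMod k) ≠ 0 ∧ (t3 : ZMod k) ≠ 0 ∧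
                  (t1 : ZMod k) ≠ (t4 : ZMod k) ∧ (t1 : ZMod k) ≠ (t5 : ZMod k) ∧
                  (t2 : ZMod k) ≠ (t4 : ZMod k) ∧ (t2 : ZMod k) ≠ (t5 : ZMod k) ∧
                  (t3 : ZMod k) ≠ (t4 : ZMod k) ∧ (t3 : ZMod k) ≠ (t5 : ZMod k) ∧
                  (t1 : ZMod k) + t2 + t3 ≠ (t4 : ZMod k) + t5 then
                (-1 : ℂ) ^ (t3 + t5) * ∑ a : F, ∑ b : F,
                  (χ ^ ((t1 : ℤ) - t5)) a * (χ ^ ((t5 : ℤ) - t3)) (1 - a) *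
                    (χ ^ (t2 : ℤ)) b * (χ ^ ((t4 : ℤ) - t2)) (b - 1) *
                    (χ ^ (-(t1 : ℤ))) (a - b)
              else 0) := by
  have : NeZero k := ⟨by omega⟩
  have h : Paley.Good k χ := Paley.good_of hkeven hq hmod hχ
  rw [h.count (Paley.neg_one_not_pow hkeven hq hmod), hq, h.isFive.total,
    Paley.edge_total h.isSign h.isJac, h.sum_X, h.Rk_eq, h.Sk_eq, h.Smk_eq, ZMod.card, hq]
  ring
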